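/- (Footnote 7 / Lemma 16(i) with Equation (72).) For s > 0, let 𝒩_{A}^{1&2}(s) be the number of conjugacy classes of PSL₂(ℤ) consisting of primitive hyperbolic elements γ with translation length ℓ(γ) = 2·arcosh(|tr γ|/2) ≤ s that contain both an element ambiguous of the first kind and an element ambiguous of the second kind. Then, as s → +∞, 𝒩_{A}^{1&2}(s) = (3/(8π²)) s² e^{s/2} + O(s e^{s/2}). -/

import Mathlib

open Matrix
open scoped MatrixGroups

instance : Fact (Even (Fintype.card (Fin 2))) := ⟨⟨1, rfl⟩⟩

/-- The determinant `-1` integer matrix `W = [[1, 0], [0, -1]]`. -/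
noncomputable def Wmat : Matrix (Fin 2) (Fin 2) ℤ := !![1, 0; 0, -1]

/-- The determinant `-1` integer matrix `W₁ = [[1, 0], [1, -1]]`. -/
noncomputable def W1mat : Matrix (Fin 2) (Fin 2) ℤ := !![1, 0; 1, -1]

/-- A lift `A ∈ SL₂(ℤ)` is ambiguous of the first kind if `W·A·W⁻¹ = ±A⁻¹`. -/
def Amb1 (A : SL(2, ℤ)) : Prop :=
  Wmat * (A : Matrix (Fin 2) (Fin 2) ℤ) * Wmat⁻¹ = ((A⁻¹ : SL(2, ℤ)) : Matrix (Fin 2) (Fin 2) ℤ) ∨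
  Wmat * (A : Matrix (Fin 2) (Fin 2) ℤ) * Wmat⁻¹ = -((A⁻¹ : SL(2, ℤ)) : Matrix (Fin 2) (Fin 2) ℤ)

/-- A lift `A ∈ SL₂(ℤ)` is ambiguous of the second kind if `W₁·A·W₁⁻¹ = ±A⁻¹`. -/
def Amb2 (A : SL(2, ℤ)) : Prop :=
  W1mat * (A : Matrix (Fin 2) (Fin 2) ℤ) * W1mat⁻¹ = ((A⁻¹ : SL(2, ℤ)) : Matrix (Fin 2) (Fin 2) ℤ) ∨
  W1mat * (A : Matrix (Fin 2) (Fin 2) ℤ) * W1mat⁻¹ = -((A⁻¹ : SL(2, ℤ)) : Matrix (Fin 2) (Fin 2) ℤ)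

/-- The subgroup `{±1}` of `SL₂(ℤ)`. -/
def pmOne : Subgroup SL(2, ℤ) := Subgroup.zpowers (-1)

instance : pmOne.Normal := by
  constructor
  intro x hx g
  obtain ⟨n, rfl⟩ := Subgroup.mem_zpowers_iff.mp hx
  have hc : Commute g (-1 : SL(2, ℤ)) := by
    show g * (-1) = (-1) * g
    apply Subtype.ext
    show ((g * (-1) : SL(2, ℤ)) : Matrix (Fin 2) (Fin 2) ℤ)
        = (((-1) * g : SL(2, ℤ)) : Matrix (Fin 2) (Fin 2) ℤ)
    simp
  have hcn : Commute g ((-1 : SL(2, ℤ)) ^ n) := hc.zpow_right n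
  have : g * (-1 : SL(2, ℤ)) ^ n * g⁻¹ = (-1) ^ n := by
    rw [hcn.eq, mul_assoc, mul_inv_cancel, mul_one]
  rw [this]
  exact Subgroup.zpow_mem _ (Subgroup.mem_zpowers _) n

/-- `PSL₂(ℤ) = SL₂(ℤ)/{±1}`. -/
abbrev PSL2Z := SL(2, ℤ) ⧸ pmOne

/-- An element of `PSL₂(ℤ)` is hyperbolic if the absolute value of the trace of a lift
to `SL₂(ℤ)` is greater than `2`. -/
def IsHyp (γ : PSL2Z) : Prop :=
  ∃ A : SL(2, ℤ), (QuotientGroup.mk A : PSL2Z) = γ ∧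
    2 < |Matrix.trace (A : Matrix (Fin 2) (Fin 2) ℤ)|

/-- An element of `PSL₂(ℤ)` is primitive if it is not a proper power. -/
def IsPrim (γ : PSL2Z) : Prop := ¬ ∃ (δ : PSL2Z) (n : ℕ), 2 ≤ n ∧ δ ^ n = γ

/-- An element of `PSL₂(ℤ)` is ambiguous of the first kind if it has a lift which is. -/
def AmbFst (γ : PSL2Z) : Prop :=
  ∃ A : SL(2, ℤ), (QuotientGroup.mk A : PSL2Z) = γ ∧ Amb1 A

/-- An element of `PSL₂(ℤ)` is ambiguous of the second kind if it has a lift which is. -/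
def AmbSnd (γ : PSL2Z) : Prop :=
  ∃ A : SL(2, ℤ), (QuotientGroup.mk A : PSL2Z) = γ ∧ Amb2 A

/-- The inverse hyperbolic cosine. -/
noncomputable def arcosh (x : ℝ) : ℝ := Real.log (x + Real.sqrt (x ^ 2 - 1))

/-- The translation length `ℓ(γ) = 2 arcosh(|tr γ|/2)` of `γ ∈ PSL₂(ℤ)` is at most `s`. -/
def TransLenLE (γ : PSL2Z) (s : ℝ) : Prop :=
  ∃ A : SL(2, ℤ), (QuotientGroup.mk A : PSL2Z) = γ ∧
    2 * arcosh (((|Matrix.trace (A : Matrix (Fin 2) (Fin 2) ℤ)| : ℤ) : ℝ) / 2) ≤ s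

/-- The number of conjugacy classes of primitive hyperbolic elements of `PSL₂(ℤ)` with
translation length at most `s` containing both an element ambiguous of the first kind
and an element ambiguous of the second kind. -/
noncomputable def NAmbBoth (s : ℝ) : ℕ :=
  {C : ConjClasses PSL2Z | ∃ γ : PSL2Z, ConjClasses.mk γ = C ∧
      IsPrim γ ∧ IsHyp γ ∧ TransLenLE γ s ∧
      (∃ δ : PSL2Z, IsConj γ δ ∧ AmbFst δ) ∧
      (∃ δ : PSL2Z, IsConj γ δ ∧ AmbSnd δ)}.ncard

/-!
A hyperbolic element ambiguous of the first kind is conjugate to the image of a normalized matrix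
`A = [[a, b], [c, a]]` with positive entries, `b * c = a ^ 2 - 1`. The centralizer of a primitive
such `A` consists of the `± A ^ k` (Pell's equation), so the reflections inverting it are the
`± W * A ^ k`, which up to conjugation are `W` and `W * A`. If `A ∉ Γ(2)`, then `W * A` is conjugate
to `W₁` up to sign; if `A ∈ Γ(2)`, both reflections are of the first kind. Hence the classes of
both kinds correspond bijectively to the primitive normalized matrices outside `Γ(2)`, and the
non-primitive ones are negligible.

By transposition it suffices to count twice the pairs `b < a ≤ N := ⌊cosh (s / 2)⌋` with
`b ∣ a ^ 2 - 1`. Splitting `b = u * v` with `u ∣ a - 1` and `v ∣ a + 1` coprime (after removing a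
factor `4` when `b` is even), the Chinese remainder theorem turns this into sums of `N / (u * v)`
over coprime pairs under a hyperbola, of total size `(3 / π ^ 2) * N * log N ^ 2`, and
`N ~ exp (s / 2) / 2`.
-/

open CongruenceSubgroup

/-! ### Matrices and classes in `PSL₂(ℤ)` -/

section Matrices

theorem sl_det_eq (A : SL(2, ℤ)) : A 0 0 * A 1 1 - A 0 1 * A 1 0 = 1 := by
  rw [← det_fin_two, A.det_coe]

theorem sl_ext {A B : SL(2, ℤ)} (h₀₀ : A 0 0 = B 0 0) (h₀₁ : A 0 1 = B 0 1)
    (h₁₀ : A 1 0 = B 1 0) (h₁₁ : A 1 1 = B 1 1) : A = B := by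
  ext i j
  fin_cases i <;> fin_cases j <;> assumption

theorem sl_mul_apply (A B : SL(2, ℤ)) (i j : Fin 2) :
    (A * B) i j = A i 0 * B 0 j + A i 1 * B 1 j := by
  rw [Matrix.SpecialLinearGroup.coe_mul, mul_apply, Fin.sum_univ_two]

theorem apply_eq_of_commute {g A : SL(2, ℤ)} (h : Commute g A) (hA : A 0 0 = A 1 1)
    (hb : A 0 1 ≠ 0) : g 0 0 = g 1 1 ∧ g 0 1 * A 1 0 = A 0 1 * g 1 0 := by
  have h₀₀ : (g * A) 0 0 = (A * g) 0 0 := by rw [h.eq]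
  have h₀₁ : (g * A) 0 1 = (A * g) 0 1 := by rw [h.eq]
  rw [sl_mul_apply, sl_mul_apply] at h₀₀ h₀₁
  exact ⟨mul_left_cancel₀ hb (by linear_combination h₀₁ + g 0 1 * hA),
    by linear_combination h₀₀⟩

theorem trace_eq_of_semiconjBy {g A B : SL(2, ℤ)} (h : SemiconjBy g A B) :
    trace A.1 = trace B.1 := by
  rw [← mul_inv_eq_iff_eq_mul.2 h.eq, Matrix.SpecialLinearGroup.coe_mul, trace_mul_comm,
    ← Matrix.SpecialLinearGroup.coe_mul, inv_mul_cancel_left]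

theorem mem_pmOne_iff (A : SL(2, ℤ)) : A ∈ pmOne ↔ A = 1 ∨ A = -1 := by
  rw [pmOne, Subgroup.mem_zpowers_iff]
  constructor
  · rintro ⟨k, rfl⟩
    exact k.even_or_odd.imp Even.neg_one_zpow Odd.neg_one_zpow
  · rintro (rfl | rfl)
    exacts [⟨0, zpow_zero _⟩, ⟨1, zpow_one _⟩]

theorem psl_coe_eq_coe_iff (A B : SL(2, ℤ)) : (A : PSL2Z) = B ↔ A = B ∨ A = -B := by
  rw [eq_comm, QuotientGroup.eq, mem_pmOne_iff, inv_mul_eq_one, inv_mul_eq_iff_eq_mul, mul_neg,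
    mul_one, eq_comm]

theorem psl_coe_neg (A : SL(2, ℤ)) : ((-A : SL(2, ℤ)) : PSL2Z) = A :=
  (psl_coe_eq_coe_iff _ _).2 (Or.inr rfl)

theorem isConj_psl_coe_iff (A B : SL(2, ℤ)) :
    IsConj (A : PSL2Z) B ↔ ∃ g, SemiconjBy g A B ∨ SemiconjBy g A (-B) := by
  rw [isConj_iff, QuotientGroup.mk_surjective.exists]
  refine exists_congr fun g ↦ ?_
  rw [← QuotientGroup.mk_inv, ← QuotientGroup.mk_mul, ← QuotientGroup.mk_mul, psl_coe_eq_coe_iff,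
    mul_inv_eq_iff_eq_mul, mul_inv_eq_iff_eq_mul]
  rfl

theorem isPrim_of_isConj {γ δ : PSL2Z} (h : IsConj γ δ) (hγ : IsPrim γ) : IsPrim δ := by
  rintro ⟨η, n, hn, rfl⟩
  obtain ⟨c, hc⟩ := isConj_iff.1 h.symm
  exact hγ ⟨c * η * c⁻¹, n, hn, by rw [← hc, conj_pow]⟩

theorem abs_trace_eq_of_isConj {A B : SL(2, ℤ)} (h : IsConj (A : PSL2Z) B) :
    |trace A.1| = |trace B.1| := by
  obtain ⟨g, hg | hg⟩ := (isConj_psl_coe_iff A B).1 h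
  · rw [trace_eq_of_semiconjBy hg]
  · rw [trace_eq_of_semiconjBy hg, Matrix.SpecialLinearGroup.coe_neg, trace_neg, abs_neg]

theorem isHyp_coe_iff (A : SL(2, ℤ)) : IsHyp A ↔ 2 < |trace A.1| := by
  refine ⟨fun ⟨B, hB, h⟩ ↦ ?_, fun h ↦ ⟨A, rfl, h⟩⟩
  rwa [← abs_trace_eq_of_isConj (by rw [hB])]

theorem transLenLE_coe_iff (A : SL(2, ℤ)) (s : ℝ) :
    TransLenLE A s ↔ 2 * arcosh ((|trace A.1| : ℤ) / 2) ≤ s := by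
  refine ⟨fun ⟨B, hB, h⟩ ↦ ?_, fun h ↦ ⟨A, rfl, h⟩⟩
  rwa [← abs_trace_eq_of_isConj (by rw [hB])]

end Matrices

section Ambiguous

theorem semiconjBy_Wmat_iff (A : SL(2, ℤ)) : SemiconjBy Wmat A.1 (A⁻¹).1 ↔ A 0 0 = A 1 1 := by
  rw [SemiconjBy, Matrix.SpecialLinearGroup.coe_inv, adjugate_fin_two]
  simp only [Wmat, ← Matrix.ext_iff, Fin.forall_fin_two, mul_apply, Fin.sum_univ_two, of_apply,
    cons_val_zero, cons_val_one, cons_val', cons_val_fin_one]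
  grind

theorem conj_eq_inv_or_neg_iff {V : Matrix (Fin 2) (Fin 2) ℤ} (hV₀₀ : V 0 0 = 1)
    (hV₀₁ : V 0 1 = 0) (hV₁₁ : V 1 1 = -1) (A : SL(2, ℤ)) :
    V * A.1 * V⁻¹ = (A⁻¹).1 ∨ V * A.1 * V⁻¹ = -(A⁻¹).1 ↔ SemiconjBy V A.1 (A⁻¹).1 := by
  have hV : IsUnit V.det := by simp [det_fin_two, hV₀₀, hV₀₁, hV₁₁]
  let := V.invertibleOfIsUnitDet hV
  rw [mul_inv_eq_iff_eq_mul_of_invertible, mul_inv_eq_iff_eq_mul_of_invertible,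
    SemiconjBy, or_iff_left_iff_imp]
  intro h
  rw [Matrix.SpecialLinearGroup.coe_inv, adjugate_fin_two] at h
  have h₀₀ : A 0 0 = -A 1 1 + A 0 1 * V 1 0 := by
    simpa [mul_apply, hV₀₀, hV₀₁] using congr_fun₂ h 0 0
  have h₀₁ : A 0 1 = 0 := by
    have : A 0 1 = -A 0 1 := by simpa [mul_apply, hV₀₀, hV₀₁, hV₁₁] using congr_fun₂ h 0 1
    omega
  have hdet := sl_det_eq A
  rw [h₀₀, h₀₁] at hdet
  nlinarith [sq_nonneg (A 1 1)]

theorem amb1_iff (A : SL(2, ℤ)) : Amb1 A ↔ A 0 0 = A 1 1 :=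
  (conj_eq_inv_or_neg_iff rfl rfl rfl A).trans (semiconjBy_Wmat_iff A)

theorem amb2_iff (A : SL(2, ℤ)) : Amb2 A ↔ SemiconjBy W1mat A.1 (A⁻¹).1 :=
  conj_eq_inv_or_neg_iff rfl rfl rfl A

end Ambiguous

/-! ### Centralizers -/

section Centralizer

/-- The embedding of the solutions of Pell's equation `x² - βκy² = 1` into `SL₂(ℤ)` which sends
`(x, y)` to `[[x, βy], [κy, x]]`. -/
def pellHom (β κ : ℤ) : Pell.Solution₁ (β * κ) →* SL(2, ℤ) where
  toFun z := ⟨!![z.x, β * z.y; κ * z.y, z.x], by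
    rw [det_fin_two_of]
    linear_combination z.prop⟩
  map_one' := by apply sl_ext <;> simp
  map_mul' z w := by
    apply sl_ext <;> refine Eq.trans ?_ (sl_mul_apply _ _ _ _).symm <;> simp <;> ring

theorem coe_pellHom_apply (β κ : ℤ) (z : Pell.Solution₁ (β * κ)) :
    (pellHom β κ z : Matrix (Fin 2) (Fin 2) ℤ) = !![z.x, β * z.y; κ * z.y, z.x] :=
  rfl

theorem pellHom_neg (β κ : ℤ) (z : Pell.Solution₁ (β * κ)) :
    pellHom β κ (-z) = -pellHom β κ z := by
  apply sl_ext <;> simp [coe_pellHom_apply]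

theorem mem_range_pellHom {β κ : ℤ} (hβ : β ≠ 0) (hcop : IsCoprime β κ) {g : SL(2, ℤ)}
    (hg : g 0 0 = g 1 1) (hgβκ : g 0 1 * κ = β * g 1 0) : g ∈ (pellHom β κ).range := by
  obtain ⟨y, hy⟩ : β ∣ g 0 1 := hcop.dvd_of_dvd_mul_right ⟨_, hgβκ⟩
  have hyκ : g 1 0 = κ * y := by
    rw [hy] at hgβκ
    exact mul_left_cancel₀ hβ (by linear_combination -hgβκ)
  have hpell : g 0 0 ^ 2 - β * κ * y ^ 2 = 1 := by
    have hdet := sl_det_eq g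
    rw [← hg, hy, hyκ] at hdet
    linear_combination hdet
  exact ⟨.mk (g 0 0) y hpell, sl_ext rfl hy.symm hyκ.symm hg⟩

theorem exists_pellHom_range_psl_coe_mem_zpowers {β κ : ℤ} {z : Pell.Solution₁ (β * κ)}
    (hz : 1 < z.x) :
    ∃ δ : PSL2Z, ∀ g ∈ (pellHom β κ).range, (g : PSL2Z) ∈ Subgroup.zpowers δ := by
  obtain ⟨F, hF⟩ := Pell.IsFundamental.exists_of_not_isSquare
    (Pell.Solution₁.d_pos_of_one_lt_x hz) (Pell.Solution₁.d_nonsquare_of_one_lt_x hz)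
  refine ⟨(pellHom β κ F : PSL2Z), ?_⟩
  rintro _ ⟨w, rfl⟩
  obtain ⟨n, rfl | rfl⟩ := hF.eq_zpow_or_neg_zpow w
  · exact ⟨n, by rw [map_zpow, QuotientGroup.mk_zpow]⟩
  · exact ⟨n, by rw [pellHom_neg, psl_coe_neg, map_zpow, QuotientGroup.mk_zpow]⟩

theorem mem_zpowers_of_isPrim {γ δ : PSL2Z} (hγ : IsPrim γ) (h : γ ∈ Subgroup.zpowers δ) :
    δ ∈ Subgroup.zpowers γ := by
  obtain ⟨k, rfl⟩ := h
  have hk : k.natAbs < 2 := by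
    by_contra! hk
    refine hγ ⟨δ ^ k.sign, k.natAbs, hk, ?_⟩
    rw [← zpow_natCast, ← _root_.zpow_mul, Int.sign_mul_natAbs]
  obtain rfl | rfl | rfl : k = 0 ∨ k = 1 ∨ k = -1 := by omega
  · exact absurd ⟨1, 2, le_rfl, by simp⟩ hγ
  · exact ⟨1, by simp⟩
  · exact ⟨-1, by simp⟩

theorem exists_zpow_of_commute {A g : SL(2, ℤ)} (hprim : IsPrim A) (hA : A 0 0 = A 1 1)
    (hA₀ : 1 < A 0 0) (h : Commute g A) : ∃ k : ℤ, g = A ^ k ∨ g = -A ^ k := by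
  have hbc : A 0 1 * A 1 0 = A 0 0 ^ 2 - 1 := by linear_combination -sl_det_eq A - A 0 0 * hA
  have hb : A 0 1 ≠ 0 := fun hb ↦ by rw [hb] at hbc; nlinarith
  obtain ⟨β, κ, hβκ, hβ, hκ⟩ := Int.exists_gcd_one (Int.gcd_pos_of_ne_zero_left (A 1 0) hb)
  set e := ((A 0 1).gcd (A 1 0) : ℤ)
  have he : e ≠ 0 := fun he ↦ hb (by rw [hβ, he, mul_zero])
  have hrange : ∀ D : SL(2, ℤ), Commute D A → D ∈ (pellHom β κ).range := fun D hD ↦ by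
    obtain ⟨hD₀, hD₁⟩ := apply_eq_of_commute hD hA hb
    refine mem_range_pellHom (fun hβ₀ ↦ hb (by rw [hβ, hβ₀, zero_mul]))
      (Int.isCoprime_iff_gcd_eq_one.2 hβκ) hD₀ (mul_right_cancel₀ he ?_)
    rw [hβ, hκ] at hD₁
    linear_combination hD₁
  obtain ⟨z, hz⟩ := hrange A (Commute.refl A)
  have hzx : z.x = A 0 0 := by rw [← hz]; rfl
  obtain ⟨δ, hδ⟩ := exists_pellHom_range_psl_coe_mem_zpowers (z := z) (by omega)
  have hδA : δ ∈ Subgroup.zpowers (A : PSL2Z) :=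
    mem_zpowers_of_isPrim hprim (hδ A (hrange A (Commute.refl A)))
  obtain ⟨k, hk⟩ := Subgroup.zpowers_le.2 hδA (hδ g (hrange g h))
  exact ⟨k, (psl_coe_eq_coe_iff _ _).1 hk.symm⟩

end Centralizer

/-! ### Reflections inverting an element -/

section Reflections

theorem Wmat_mul_Wmat : Wmat * Wmat = 1 := by
  simp [Wmat, one_fin_two]

theorem semiconjBy_coe {g A B : SL(2, ℤ)} (h : SemiconjBy g A B) : SemiconjBy g.1 A.1 B.1 :=
  congr_arg Subtype.val h

theorem semiconjBy_Wmat_inv {A : SL(2, ℤ)} (hA : A 0 0 = A 1 1) :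
    SemiconjBy Wmat (A⁻¹).1 A.1 := by
  rw [← inv_inv A, inv_inv A⁻¹, semiconjBy_Wmat_iff]
  simp [Matrix.SpecialLinearGroup.SL2_inv_expl, hA]

theorem exists_mul_eq_mul_Wmat_mul {V : Matrix (Fin 2) (Fin 2) ℤ} (hV : V.det = -1)
    (g : SL(2, ℤ)) :
    ∃ h : SL(2, ℤ), h.1 = Wmat * ((g⁻¹).1 * (V * g.1)) ∧ V * g.1 = g.1 * Wmat * h.1 := by
  have hdet : (Wmat * ((g⁻¹).1 * (V * g.1))).det = 1 := by
    have hW : Wmat.det = -1 := by simp [Wmat]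
    rw [det_mul, det_mul, det_mul, hV, hW, g.det_coe, (g⁻¹).det_coe]
    norm_num
  refine ⟨⟨_, hdet⟩, rfl, ?_⟩
  calc V * g.1 = g.1 * (Wmat * Wmat) * (g⁻¹).1 * (V * g.1) := by
        rw [Wmat_mul_Wmat, mul_one, ← Matrix.SpecialLinearGroup.coe_mul, mul_inv_cancel,
          Matrix.SpecialLinearGroup.coe_one, one_mul]
    _ = g.1 * Wmat * (Wmat * ((g⁻¹).1 * (V * g.1))) := by simp only [mul_assoc]

theorem exists_mul_eq_mul_zpow_of_inverts {V : Matrix (Fin 2) (Fin 2) ℤ} (hV : V.det = -1)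
    {A B g : SL(2, ℤ)} (hprim : IsPrim A) (hA : A 0 0 = A 1 1) (hA₀ : 1 < A 0 0)
    (hVB : SemiconjBy V B.1 (B⁻¹).1) (hg : SemiconjBy g A B) :
    ∃ k : ℤ, V * g.1 = g.1 * Wmat * (A ^ k).1 ∨ V * g.1 = -(g.1 * Wmat * (A ^ k).1) := by
  obtain ⟨h, hh, hVg⟩ := exists_mul_eq_mul_Wmat_mul hV g
  have hcomm : Commute h A := Subtype.ext <| show SemiconjBy h.1 A.1 A.1 from hh ▸
    ((semiconjBy_Wmat_inv hA).mul_left <| (semiconjBy_coe hg.inv_symm_left.inv_right).mul_left <|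
      hVB.mul_left <| semiconjBy_coe hg)
  obtain ⟨k, hk | hk⟩ := exists_zpow_of_commute hprim hA hA₀ hcomm
  · exact ⟨k, Or.inl (by rw [hVg, hk])⟩
  · exact ⟨k, Or.inr (by rw [hVg, hk, Matrix.SpecialLinearGroup.coe_neg, mul_neg])⟩

theorem semiconjBy_Wmat_zpow {A : SL(2, ℤ)} (hA : A 0 0 = A 1 1) (hb : A 0 1 ≠ 0) (j : ℤ) :
    SemiconjBy Wmat (A ^ j).1 (A ^ (-j)).1 := by
  rw [_root_.zpow_neg]
  exact (semiconjBy_Wmat_iff _).2 (apply_eq_of_commute (Commute.self_zpow A j).symm hA hb).1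

/-- Multiplying `g` on the right by a power of `A` changes the exponent by an even number. -/
theorem exists_semiconjBy_mul_eq_mul_pow_of_inverts {V : Matrix (Fin 2) (Fin 2) ℤ}
    (hV : V.det = -1) {A B g : SL(2, ℤ)} (hprim : IsPrim A) (hA : A 0 0 = A 1 1)
    (hA₀ : 1 < A 0 0) (hVB : SemiconjBy V B.1 (B⁻¹).1) (hg : SemiconjBy g A B) :
    ∃ h : SL(2, ℤ), SemiconjBy h A B ∧ ∃ n < 2,
      V * h.1 = h.1 * Wmat * (A ^ n).1 ∨ V * h.1 = -(h.1 * Wmat * (A ^ n).1) := by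
  have hb : A 0 1 ≠ 0 := fun hb ↦ by
    have := sl_det_eq A
    rw [hb] at this
    nlinarith
  obtain ⟨k, hk⟩ := exists_mul_eq_mul_zpow_of_inverts hV hprim hA hA₀ hVB hg
  have hshift : g.1 * Wmat * (A ^ k).1 * (A ^ (-(k / 2))).1
      = (g * A ^ (-(k / 2))).1 * Wmat * (A ^ (k % 2).toNat).1 := by
    have hpow : A ^ k * A ^ (-(k / 2)) = A ^ (k / 2) * A ^ (k % 2).toNat := by
      rw [← zpow_natCast, ← _root_.zpow_add, ← _root_.zpow_add]
      congr 1
      omega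
    rw [mul_assoc _ (A ^ k).1, ← Matrix.SpecialLinearGroup.coe_mul, hpow,
      Matrix.SpecialLinearGroup.coe_mul, Matrix.SpecialLinearGroup.coe_mul, mul_assoc g.1 _ Wmat,
      ← (semiconjBy_Wmat_zpow hA hb (k / 2)).eq]
    simp only [mul_assoc]
  refine ⟨g * A ^ (-(k / 2)), hg.mul_left (Commute.self_zpow A _).symm, (k % 2).toNat,
    by omega, ?_⟩
  rw [← hshift, Matrix.SpecialLinearGroup.coe_mul, ← mul_assoc]
  exact hk.imp (by rw [·]) (by rw [·, neg_mul])

theorem mem_Gamma_two_iff_of_mul_eq {V : Matrix (Fin 2) (Fin 2) ℤ} {g D : SL(2, ℤ)}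
    (h : V * g.1 = g.1 * Wmat * D.1 ∨ V * g.1 = -(g.1 * Wmat * D.1)) :
    D ∈ Gamma 2 ↔ V.map ((↑) : ℤ → ZMod 2) = 1 := by
  let φ := (Int.castRingHom (ZMod 2)).mapMatrix (m := Fin 2)
  have hW : φ Wmat = 1 := by decide
  have hφ : φ V * φ g.1 = φ g.1 * φ D.1 := by
    have hneg : ∀ M : Matrix (Fin 2) (Fin 2) (ZMod 2), -M = M := fun M ↦ by ext; simp
    obtain h | h := h <;> simpa [hW, hneg] using congr_arg φ h
  have hg : IsUnit (φ g.1) := by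
    refine ⟨⟨φ g.1, φ (g⁻¹).1, ?_, ?_⟩, rfl⟩ <;>
      rw [← map_mul, ← Matrix.SpecialLinearGroup.coe_mul] <;> simp
  have hD : D ∈ Gamma 2 ↔ φ D.1 = 1 := Gamma_mem'.trans Subtype.ext_iff
  change _ ↔ φ V = 1
  rw [hD, ← hg.mul_right_inj, ← hφ, mul_one, ← hg.mul_left_inj (b := φ V), one_mul]

theorem notMem_Gamma_two_of_ambSnd {A : SL(2, ℤ)} {δ : PSL2Z} (hprim : IsPrim A)
    (hA : A 0 0 = A 1 1) (hA₀ : 1 < A 0 0) (hconj : IsConj (A : PSL2Z) δ) (hδ : AmbSnd δ) :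
    A ∉ Gamma 2 := by
  obtain ⟨B, rfl, hB⟩ := hδ
  rw [amb2_iff] at hB
  obtain ⟨C, g, hC, hg⟩ : ∃ C g, SemiconjBy W1mat C.1 (C⁻¹).1 ∧ SemiconjBy g A C := by
    obtain ⟨g, hg | hg⟩ := (isConj_psl_coe_iff A B).1 hconj
    · exact ⟨B, g, hB, hg⟩
    · refine ⟨-B, g, ?_, hg⟩
      rw [_root_.inv_neg]
      simpa using hB
  obtain ⟨h, -, n, -, hn⟩ := exists_semiconjBy_mul_eq_mul_pow_of_inverts (V := W1mat)
    (by simp [W1mat]) hprim hA hA₀ hC hg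
  intro hΓ
  have hmod := (mem_Gamma_two_iff_of_mul_eq hn).1 (pow_mem hΓ n)
  exact absurd hmod (by decide)

theorem eq_of_semiconjBy_of_Wmat_mul_eq {A B g : SL(2, ℤ)} (hg : SemiconjBy g A B)
    (hW : Wmat * g.1 = g.1 * Wmat) : A = B := by
  have h₀₁ : g 0 1 = 0 := by
    have : g 0 1 = -g 0 1 := by simpa [Wmat, mul_apply] using congr_fun₂ hW 0 1
    omega
  have h₁₀ : g 1 0 = 0 := by
    have : -g 1 0 = g 1 0 := by simpa [Wmat, mul_apply] using congr_fun₂ hW 1 0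
    omega
  have hdet := sl_det_eq g
  rw [h₀₁, zero_mul, sub_zero] at hdet
  suffices g = 1 ∨ g = -1 by
    obtain rfl | rfl := this
    · simpa [SemiconjBy] using hg
    · simpa [SemiconjBy] using hg
  obtain ⟨h₀₀, h₁₁⟩ | ⟨h₀₀, h₁₁⟩ := Int.mul_eq_one_iff_eq_one_or_neg_one.1 hdet
  · exact Or.inl (sl_ext h₀₀ h₀₁ h₁₀ h₁₁)
  · exact Or.inr (sl_ext h₀₀ h₀₁ h₁₀ h₁₁)

end Reflections

/-! ### Normalized representatives -/

/-- The normal form of the lifts of a hyperbolic element ambiguous of the first kind: equal diagonal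
entries, and all entries positive. Every class of such elements contains one. -/
structure IsNormalized (A : SL(2, ℤ)) : Prop where
  apply_eq : A 0 0 = A 1 1
  one_lt : 1 < A 0 0
  pos₀₁ : 0 < A 0 1
  pos₁₀ : 0 < A 1 0

namespace IsNormalized

variable {A B : SL(2, ℤ)}

theorem mul_add_one_eq (hA : IsNormalized A) : A 0 1 * A 1 0 + 1 = A 0 0 * A 0 0 := by
  linear_combination -sl_det_eq A - A 0 0 * hA.apply_eq

theorem mem_Gamma_two_iff (hA : IsNormalized A) : A ∈ Gamma 2 ↔ Even (A 0 1) ∧ Even (A 1 0) := by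
  have hodd : Even (A 0 1) → ((A 0 0 : ℤ) : ZMod 2) = 1 := fun h ↦ by
    have hmul : Odd (A 0 0 * A 0 0) := hA.mul_add_one_eq ▸ (h.mul_right _).add_one
    exact ZMod.intCast_eq_one_iff_odd.2 (Int.odd_mul.1 hmul).1
  rw [Gamma_mem, ← hA.apply_eq]
  simp only [ZMod.intCast_eq_zero_iff_even]
  tauto

theorem trace_eq (hA : IsNormalized A) : trace A.1 = 2 * A 0 0 := by
  rw [trace_fin_two, ← hA.apply_eq, two_mul]

theorem exists_semiconjBy_of_isConj (hA : IsNormalized A) (hB : IsNormalized B)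
    (h : IsConj (A : PSL2Z) B) : ∃ g, SemiconjBy g A B := by
  obtain ⟨g, hg | hg⟩ := (isConj_psl_coe_iff A B).1 h
  · exact ⟨g, hg⟩
  · have htrace := trace_eq_of_semiconjBy hg
    rw [Matrix.SpecialLinearGroup.coe_neg, trace_neg, hA.trace_eq, hB.trace_eq] at htrace
    linarith [hA.one_lt, hB.one_lt]

theorem Wmat_mul_ne_neg (hA : IsNormalized A) (hB : IsNormalized B) {g : SL(2, ℤ)}
    (hg : SemiconjBy g A B) : Wmat * g.1 ≠ -(g.1 * Wmat) := by
  intro hW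
  have h₀₀ : g 0 0 = 0 := by
    have : g 0 0 = -g 0 0 := by simpa [Wmat, mul_apply] using congr_fun₂ hW 0 0
    omega
  have hgA : (g * A) 0 0 = (B * g) 0 0 := by rw [hg.eq]
  have hdet := sl_det_eq g
  rw [sl_mul_apply, sl_mul_apply, h₀₀] at hgA
  rw [h₀₀] at hdet
  have : A 1 0 + B 0 1 * g 1 0 ^ 2 = 0 := by
    linear_combination -(g 1 0) * hgA - A 1 0 * hdet
  nlinarith [hA.pos₁₀, hB.pos₀₁, sq_nonneg (g 1 0)]

theorem eq_of_isConj (hA : IsNormalized A) (hB : IsNormalized B) (hprim : IsPrim A)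
    (hΓ : A ∉ Gamma 2) (h : IsConj (A : PSL2Z) B) : A = B := by
  obtain ⟨g₀, hg₀⟩ := hA.exists_semiconjBy_of_isConj hB h
  obtain ⟨g, hg, n, hn, hgn⟩ := exists_semiconjBy_mul_eq_mul_pow_of_inverts (V := Wmat)
    (by simp [Wmat]) hprim hA.apply_eq hA.one_lt ((semiconjBy_Wmat_iff B).2 hB.apply_eq) hg₀
  obtain rfl : n = 0 := by
    by_contra hn₀
    obtain rfl : n = 1 := by omega
    have hmod := (mem_Gamma_two_iff_of_mul_eq hgn).2 (by decide)
    exact hΓ (by rwa [pow_one] at hmod)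
  rw [pow_zero, Matrix.SpecialLinearGroup.coe_one, mul_one] at hgn
  exact eq_of_semiconjBy_of_Wmat_mul_eq hg (hgn.resolve_right (hA.Wmat_mul_ne_neg hB hg))

end IsNormalized

section SecondKind

theorem exists_isCoprime_mulVec_eq_neg {V : Matrix (Fin 2) (Fin 2) ℤ} (hdet : V.det = -1)
    (htr : V.trace = 0) :
    ∃ x y : ℤ, IsCoprime x y ∧ V *ᵥ ![x, y] = -![x, y] := by
  have hsing : (V + 1).det = 0 := by
    rw [trace_fin_two] at htr
    rw [det_fin_two] at hdet
    have hV : (V + 1).det = (V 0 0 + 1) * (V 1 1 + 1) - V 0 1 * V 1 0 := by simp [det_fin_two]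
    linear_combination hV + hdet + htr
  obtain ⟨v, hv, hVv⟩ := exists_mulVec_eq_zero_iff.2 hsing
  have hgcd : 0 < (v 0).gcd (v 1) := by
    rw [Nat.pos_iff_ne_zero, Ne, Int.gcd_eq_zero_iff]
    exact fun h ↦ hv (funext <| Fin.forall_fin_two.2 h)
  obtain ⟨x, y, hxy, hx, hy⟩ := Int.exists_gcd_one hgcd
  refine ⟨x, y, Int.isCoprime_iff_gcd_eq_one.2 hxy, ?_⟩
  have hsmul : v = ((v 0).gcd (v 1) : ℤ) • ![x, y] := by
    ext i
    fin_cases i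
    · simpa [mul_comm] using hx
    · simpa [mul_comm] using hy
  rw [hsmul, mulVec_smul, smul_eq_zero_iff_right (by exact_mod_cast hgcd.ne'), add_mulVec,
    one_mulVec] at hVv
  exact eq_neg_of_add_eq_zero_left hVv

theorem exists_mul_eq_mul_Wmat_mul_lower {V : Matrix (Fin 2) (Fin 2) ℤ} (hdet : V.det = -1)
    (htr : V.trace = 0) :
    ∃ g D : SL(2, ℤ), D 0 0 = 1 ∧ D 0 1 = 0 ∧ D 1 1 = 1 ∧ V * g.1 = g.1 * Wmat * D.1 := by
  obtain ⟨x, y, hxy, hV⟩ := exists_isCoprime_mulVec_eq_neg hdet htr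
  obtain ⟨g, hx, hy⟩ := hxy.exists_SL2_col 1
  obtain ⟨D, hD, hVg⟩ := exists_mul_eq_mul_Wmat_mul hdet g
  have hcol : g.1 *ᵥ ![0, 1] = ![x, y] := by
    ext i
    fin_cases i <;> simp [mulVec, dotProduct, hx, hy]
  have hDcol : D.1 *ᵥ ![0, 1] = ![0, 1] := by
    have hinv : (g⁻¹).1 *ᵥ ![x, y] = ![0, 1] := by
      rw [← hcol, mulVec_mulVec, ← Matrix.SpecialLinearGroup.coe_mul, inv_mul_cancel,
        Matrix.SpecialLinearGroup.coe_one, one_mulVec]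
    rw [hD, ← mulVec_mulVec, ← mulVec_mulVec, ← mulVec_mulVec, hcol, hV, mulVec_neg, hinv]
    ext i
    fin_cases i <;> simp [Wmat, mulVec, dotProduct]
  have h₀₁ : D 0 1 = 0 := by simpa [mulVec, dotProduct] using congr_fun hDcol 0
  have h₁₁ : D 1 1 = 1 := by simpa [mulVec, dotProduct] using congr_fun hDcol 1
  have h₀₀ : D 0 0 = 1 := by simpa [h₀₁, h₁₁] using sl_det_eq D
  exact ⟨g, D, h₀₀, h₀₁, h₁₁, hVg⟩

theorem exists_mul_eq_mul_W1mat {V : Matrix (Fin 2) (Fin 2) ℤ} (hdet : V.det = -1)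
    (htr : V.trace = 0) (hmod : V.map ((↑) : ℤ → ZMod 2) ≠ 1) :
    ∃ g : SL(2, ℤ), V * g.1 = g.1 * W1mat := by
  obtain ⟨g, D, h₀₀, h₀₁, h₁₁, hVg⟩ := exists_mul_eq_mul_Wmat_mul_lower hdet htr
  have hodd : Odd (D 1 0) := by
    rw [Ne, ← mem_Gamma_two_iff_of_mul_eq (Or.inl hVg), Gamma_mem, h₀₀, h₀₁, h₁₁] at hmod
    simpa [ZMod.intCast_eq_zero_iff_even] using hmod
  obtain ⟨j, hj⟩ := hodd
  let T : SL(2, ℤ) := ⟨!![1, 0; -j - 1, 1], by simp⟩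
  have hT : Wmat * D.1 * T.1 = T.1 * W1mat := by
    rw [eta_fin_two D.1, h₀₀, h₀₁, h₁₁, hj]
    ext i k
    fin_cases i <;> fin_cases k <;> simp [Wmat, W1mat, T]
    ring
  exact ⟨g * T, by
    rw [Matrix.SpecialLinearGroup.coe_mul, ← mul_assoc, hVg, mul_assoc g.1, mul_assoc g.1, hT,
      mul_assoc]⟩

theorem exists_isConj_ambSnd {A : SL(2, ℤ)} (hA : A 0 0 = A 1 1) (hΓ : A ∉ Gamma 2) :
    ∃ δ : PSL2Z, IsConj (A : PSL2Z) δ ∧ AmbSnd δ := by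
  have hinv : SemiconjBy (Wmat * A.1) A.1 (A⁻¹).1 :=
    ((semiconjBy_Wmat_iff A).2 hA).mul_left (Commute.refl _)
  have hdet : (Wmat * A.1).det = -1 := by rw [det_mul, A.det_coe]; simp [Wmat]
  have htr : (Wmat * A.1).trace = 0 := by
    simp [Wmat, trace_fin_two, vecMul, dotProduct, hA]
  have hmod : (Wmat * A.1).map ((↑) : ℤ → ZMod 2) ≠ 1 := by
    rwa [Ne, ← mem_Gamma_two_iff_of_mul_eq (g := 1) (D := A) (Or.inl (by simp))]
  obtain ⟨g, hg⟩ := exists_mul_eq_mul_W1mat hdet htr hmod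
  have hconj : SemiconjBy g⁻¹ A (g⁻¹ * A * g) := by simp [SemiconjBy]
  refine ⟨(g⁻¹ * A * g : SL(2, ℤ)), (isConj_psl_coe_iff _ _).2 ⟨g⁻¹, Or.inl hconj⟩, _, rfl, ?_⟩
  have hW1 : W1mat = (g⁻¹).1 * (Wmat * A.1 * g.1) := by
    rw [hg, ← mul_assoc, ← Matrix.SpecialLinearGroup.coe_mul, inv_mul_cancel,
      Matrix.SpecialLinearGroup.coe_one, one_mul]
  rw [amb2_iff, hW1]
  exact (semiconjBy_coe hconj.inv_right).mul_left
    (hinv.mul_left (semiconjBy_coe (by simpa using hconj.inv_symm_left)))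

end SecondKind

section Representatives

variable {A : SL(2, ℤ)}

theorem exists_psl_coe_eq_and_one_lt (hA : A 0 0 = A 1 1) (hA₀ : 1 < |A 0 0|) :
    ∃ B : SL(2, ℤ), (B : PSL2Z) = A ∧ B 0 0 = B 1 1 ∧ 1 < B 0 0 := by
  obtain hA₀ | hA₀ := lt_abs.1 hA₀
  · exact ⟨A, rfl, hA, hA₀⟩
  · exact ⟨-A, psl_coe_neg A, by simp [hA], hA₀⟩

theorem offDiag_pos_or_neg (hA : A 0 0 = A 1 1) (hA₀ : 1 < A 0 0) :
    0 < A 0 1 ∧ 0 < A 1 0 ∨ A 0 1 < 0 ∧ A 1 0 < 0 := by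
  have hdet := sl_det_eq A
  rw [← hA] at hdet
  exact pos_and_pos_or_neg_and_neg_of_mul_pos (by nlinarith)

theorem exists_isNormalized_isConj (hA : A 0 0 = A 1 1) (hA₀ : 1 < |A 0 0|) :
    ∃ B, IsNormalized B ∧ IsConj (A : PSL2Z) B := by
  obtain ⟨C, hCA, hC, hC₀⟩ := exists_psl_coe_eq_and_one_lt hA hA₀
  rw [← hCA]
  obtain ⟨h₀₁, h₁₀⟩ | ⟨h₀₁, h₁₀⟩ := offDiag_pos_or_neg hC hC₀
  · exact ⟨C, ⟨hC, hC₀, h₀₁, h₁₀⟩, .refl _⟩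
  · let B : SL(2, ℤ) := ⟨!![C 0 0, -C 1 0; -C 0 1, C 0 0], by
      rw [det_fin_two_of]
      linear_combination sl_det_eq C + C 0 0 * hC⟩
    refine ⟨B, ⟨rfl, hC₀, neg_pos.2 h₁₀, neg_pos.2 h₀₁⟩, ?_⟩
    refine (isConj_psl_coe_iff C B).2 ⟨ModularGroup.S, Or.inl ?_⟩
    apply sl_ext <;> rw [sl_mul_apply, sl_mul_apply] <;> simp [B, ModularGroup.S, hC]

theorem exists_isNormalized_eq_or_eq_inv (hA : A 0 0 = A 1 1) (hA₀ : 1 < |A 0 0|) :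
    ∃ B, IsNormalized B ∧ ((B : PSL2Z) = A ∨ (B : PSL2Z) = (A : PSL2Z)⁻¹) := by
  obtain ⟨C, hCA, hC, hC₀⟩ := exists_psl_coe_eq_and_one_lt hA hA₀
  rw [← hCA]
  obtain ⟨h₀₁, h₁₀⟩ | ⟨h₀₁, h₁₀⟩ := offDiag_pos_or_neg hC hC₀
  · exact ⟨C, ⟨hC, hC₀, h₀₁, h₁₀⟩, .inl rfl⟩
  · refine ⟨C⁻¹, ?_, .inr (QuotientGroup.mk_inv _ _)⟩
    rw [Matrix.SpecialLinearGroup.SL2_inv_expl]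
    exact ⟨hC.symm, hC ▸ hC₀, neg_pos.2 h₀₁, neg_pos.2 h₁₀⟩

end Representatives

namespace IsNormalized

variable {A B : SL(2, ℤ)}

theorem eq_of_psl_coe_eq (hA : IsNormalized A) (hB : IsNormalized B) (h : (A : PSL2Z) = B) :
    A = B := by
  refine ((psl_coe_eq_coe_iff A B).1 h).resolve_right fun hneg ↦ ?_
  have h₀₁ : A 0 1 = -B 0 1 := by rw [hneg]; rfl
  linarith [hA.pos₀₁, hB.pos₀₁]

theorem psl_coe_ne_inv (hA : IsNormalized A) (hB : IsNormalized B) :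
    (A : PSL2Z) ≠ (B : PSL2Z)⁻¹ := by
  rw [← QuotientGroup.mk_inv, Ne, psl_coe_eq_coe_iff, Matrix.SpecialLinearGroup.SL2_inv_expl]
  rintro (h | h)
  · have h₀₁ : A 0 1 = -B 0 1 := by rw [h]; rfl
    linarith [hA.pos₀₁, hB.pos₀₁]
  · have h₀₀ : A 0 0 = -B 1 1 := by rw [h]; rfl
    linarith [hA.one_lt, hB.one_lt, hB.apply_eq]

theorem le_mul_apply (hA : IsNormalized A) (hB : IsNormalized B) :
    A 0 0 * B 0 0 ≤ (A * B) 0 0 := by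
  rw [sl_mul_apply]
  exact le_add_of_nonneg_right (mul_pos hA.pos₀₁ hB.pos₁₀).le

theorem mul (hA : IsNormalized A) (hB : IsNormalized B) (h : Commute A B) :
    IsNormalized (A * B) where
  apply_eq := by
    rw [sl_mul_apply, sl_mul_apply]
    linear_combination A 0 0 * hB.apply_eq + B 1 1 * hA.apply_eq -
      (apply_eq_of_commute h.symm hA.apply_eq hA.pos₀₁.ne').2
  one_lt := (one_lt_mul_of_lt_of_le hA.one_lt hB.one_lt.le).trans_le (hA.le_mul_apply hB)
  pos₀₁ := by
    rw [sl_mul_apply, ← hB.apply_eq]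
    have := hA.one_lt
    have := hB.one_lt
    have := hA.pos₀₁
    have := hB.pos₀₁
    positivity
  pos₁₀ := by
    rw [sl_mul_apply, ← hA.apply_eq]
    have := hA.one_lt
    have := hB.one_lt
    have := hA.pos₁₀
    have := hB.pos₁₀
    positivity

theorem pow_and_pow_le (hA : IsNormalized A) {n : ℕ} (hn : n ≠ 0) :
    IsNormalized (A ^ n) ∧ A 0 0 ^ n ≤ (A ^ n) 0 0 := by
  induction n, Nat.one_le_iff_ne_zero.2 hn using Nat.le_induction with
  | base => simpa using hA
  | succ n hn ih =>
    obtain ⟨hpow, hle⟩ := ih (by omega)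
    rw [pow_succ, pow_succ]
    refine ⟨hpow.mul hA (Commute.self_pow A n).symm, le_trans ?_ (hpow.le_mul_apply hA)⟩
    exact mul_le_mul_of_nonneg_right hle (zero_le_one.trans hA.one_lt.le)

theorem one_lt_abs_of_commute (hA : IsNormalized A) (h : Commute B A) (hB : (B : PSL2Z) ≠ 1) :
    1 < |B 0 0| := by
  obtain ⟨hdiag, hoff⟩ := apply_eq_of_commute h hA.apply_eq hA.pos₀₁.ne'
  have hdet := sl_det_eq B
  rw [← hdiag] at hdet
  have h₀₁ : B 0 1 ≠ 0 := fun h₀₁ ↦ hB <| by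
    have h₁₀ : B 1 0 = 0 := by simpa [h₀₁, hA.pos₀₁.ne'] using hoff.symm
    rw [h₀₁, zero_mul, sub_zero] at hdet
    refine (psl_coe_eq_coe_iff B 1).2 ?_
    obtain ⟨h₀₀, -⟩ | ⟨h₀₀, -⟩ := Int.mul_eq_one_iff_eq_one_or_neg_one.1 hdet
    · exact Or.inl (sl_ext h₀₀ h₀₁ h₁₀ (hdiag ▸ h₀₀))
    · exact Or.inr (sl_ext h₀₀ h₀₁ h₁₀ (hdiag ▸ h₀₀))
  have hpos : 0 < B 0 1 * B 1 0 := by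
    refine (mul_pos_iff_of_pos_right hA.pos₀₁).1 ?_
    calc 0 < B 0 1 ^ 2 * A 1 0 := mul_pos (by positivity) hA.pos₁₀
      _ = B 0 1 * B 1 0 * A 0 1 := by linear_combination B 0 1 * hoff
  rw [← one_lt_sq_iff_one_lt_abs]
  linarith

theorem exists_pow_eq_of_not_isPrim (hA : IsNormalized A) (h : ¬IsPrim A) :
    ∃ D, IsNormalized D ∧ ∃ n, 2 ≤ n ∧ D ^ n = A := by
  obtain ⟨δ, n, hn, hδ⟩ := not_not.1 h
  obtain ⟨B, rfl⟩ := QuotientGroup.mk_surjective δ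
  have hcomm : Commute B A := by
    rw [← QuotientGroup.mk_pow, psl_coe_eq_coe_iff] at hδ
    obtain hδ | hδ := hδ
    · exact hδ ▸ Commute.self_pow B n
    · exact neg_neg A ▸ hδ ▸ (Commute.self_pow B n).neg_right
  have hB : (B : PSL2Z) ≠ 1 := fun hB ↦ hA.psl_coe_ne_inv hA (by rw [← hδ, hB]; simp)
  obtain ⟨D, hD, hDB⟩ := exists_isNormalized_eq_or_eq_inv
    (apply_eq_of_commute hcomm hA.apply_eq hA.pos₀₁.ne').1 (hA.one_lt_abs_of_commute hcomm hB)
  have hDn := (hD.pow_and_pow_le (n := n) (by omega)).1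
  refine ⟨D, hD, n, hn, ?_⟩
  obtain hDB | hDB := hDB
  · exact hDn.eq_of_psl_coe_eq hA (by rw [QuotientGroup.mk_pow, hDB, hδ])
  · exact absurd (by rw [QuotientGroup.mk_pow, hDB, _root_.inv_pow, hδ]) (hDn.psl_coe_ne_inv hA)

theorem eq_of_apply₀₁ (hA : IsNormalized A) (hB : IsNormalized B) (h₀₀ : A 0 0 = B 0 0)
    (h₀₁ : A 0 1 = B 0 1) : A = B := by
  refine sl_ext h₀₀ h₀₁ (mul_left_cancel₀ hA.pos₀₁.ne' ?_) (by rw [← hA.apply_eq, h₀₀, hB.apply_eq])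
  rw [← add_left_inj 1, hA.mul_add_one_eq, h₀₀, h₀₁, hB.mul_add_one_eq]

theorem eq_of_apply₁₀ (hA : IsNormalized A) (hB : IsNormalized B) (h₀₀ : A 0 0 = B 0 0)
    (h₁₀ : A 1 0 = B 1 0) : A = B := by
  refine hA.eq_of_apply₀₁ hB h₀₀ (mul_right_cancel₀ hA.pos₁₀.ne' ?_)
  rw [← add_left_inj 1, hA.mul_add_one_eq, h₀₀, h₁₀, hB.mul_add_one_eq]

theorem apply₁₀_lt_iff (hA : IsNormalized A) : A 1 0 < A 0 0 ↔ A 0 0 ≤ A 0 1 := by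
  constructor <;> intro h <;> by_contra! h'
  · nlinarith [hA.mul_add_one_eq, hA.pos₁₀]
  · nlinarith [hA.mul_add_one_eq, hA.one_lt]

theorem transpose (hA : IsNormalized A) : IsNormalized A.transpose :=
  ⟨hA.apply_eq, hA.one_lt, hA.pos₁₀, hA.pos₀₁⟩

theorem transpose_mem_Gamma_two_iff (hA : IsNormalized A) :
    A.transpose ∈ Gamma 2 ↔ A ∈ Gamma 2 := by
  rw [hA.transpose.mem_Gamma_two_iff, hA.mem_Gamma_two_iff, and_comm]
  rfl

end IsNormalized

theorem exists_isNormalized_of_mul_add_one_eq {a b c : ℤ} (ha : 1 < a) (hb : 0 < b)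
    (h : b * c + 1 = a * a) : ∃ A, IsNormalized A ∧ A 0 0 = a ∧ A 0 1 = b ∧ A 1 0 = c := by
  have hdet : !![a, b; c, a].det = 1 := by rw [det_fin_two_of, ← h, add_sub_cancel_left]
  exact ⟨⟨_, hdet⟩, ⟨rfl, ha, hb, pos_of_mul_pos_right (by nlinarith : 0 < b * c) hb.le⟩,
    rfl, rfl, rfl⟩

/-! ### Counting normalized matrices -/

section Counting

/-- The normalized matrices of trace at most `2 * N`. -/
def normalizedMatrices (N : ℕ) : Set SL(2, ℤ) :=
  {A | IsNormalized A ∧ A 0 0 ≤ N}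

theorem IsNormalized.transLenLE_iff {A : SL(2, ℤ)} (hA : IsNormalized A) {s : ℝ} (hs : 0 ≤ s) :
    TransLenLE A s ↔ A 0 0 ≤ (⌊Real.cosh (s / 2)⌋₊ : ℤ) := by
  have hpos : (0 : ℝ) < A 0 0 := by exact_mod_cast zero_lt_one.trans hA.one_lt
  have htr : ((|trace A.1| : ℤ) : ℝ) / 2 = A 0 0 := by
    rw [hA.trace_eq, abs_of_pos (by linarith [hA.one_lt])]
    push_cast
    ring
  rw [transLenLE_coe_iff, htr, ← le_div_iff₀' two_pos,
    Int.natCast_floor_eq_floor (Real.cosh_pos _).le,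
    Int.le_floor, ← Real.arcosh_le_arcosh hpos (Real.cosh_pos _), Real.arcosh_cosh (by positivity)]
  rfl

theorem exists_mem_normalizedMatrices {γ : PSL2Z} {s : ℝ} (hs : 0 ≤ s) (hprim : IsPrim γ)
    (hhyp : IsHyp γ) (hlen : TransLenLE γ s) (hfst : ∃ δ, IsConj γ δ ∧ AmbFst δ)
    (hsnd : ∃ δ, IsConj γ δ ∧ AmbSnd δ) :
    ∃ A ∈ normalizedMatrices ⌊Real.cosh (s / 2)⌋₊, A ∉ Gamma 2 ∧ IsConj γ A := by
  obtain ⟨G, rfl⟩ := QuotientGroup.mk_surjective γ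
  obtain ⟨_, hGA, A, rfl, hA⟩ := hfst
  obtain ⟨δ, hGδ, hδ⟩ := hsnd
  rw [amb1_iff] at hA
  have hA₀ : 1 < |A 0 0| := by
    rw [isHyp_coe_iff, abs_trace_eq_of_isConj hGA, trace_fin_two, ← hA, ← two_mul, abs_mul] at hhyp
    simpa using hhyp
  obtain ⟨B, hB, hAB⟩ := exists_isNormalized_isConj hA hA₀
  have hGB := hGA.trans hAB
  refine ⟨B, ⟨hB, (hB.transLenLE_iff hs).1 ?_⟩, ?_, hGB⟩
  · rwa [transLenLE_coe_iff, ← abs_trace_eq_of_isConj hGB, ← transLenLE_coe_iff]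
  · exact notMem_Gamma_two_of_ambSnd (isPrim_of_isConj hGB hprim) hB.apply_eq hB.one_lt
      (hGB.symm.trans hGδ) hδ

theorem nAmbBoth_eq_ncard {s : ℝ} (hs : 0 ≤ s) :
    NAmbBoth s =
      {A ∈ normalizedMatrices ⌊Real.cosh (s / 2)⌋₊ | A ∉ Gamma 2 ∧ IsPrim A}.ncard := by
  set S := {A ∈ normalizedMatrices ⌊Real.cosh (s / 2)⌋₊ | A ∉ Gamma 2 ∧ IsPrim A}
  have hinj : Set.InjOn (fun A : SL(2, ℤ) ↦ ConjClasses.mk (A : PSL2Z)) S := fun A hA B hB h ↦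
    hA.1.1.eq_of_isConj hB.1.1 hA.2.2 hA.2.1 (ConjClasses.mk_eq_mk_iff_isConj.1 h)
  rw [← hinj.ncard_image, NAmbBoth]
  congr 1
  ext C
  constructor
  · rintro ⟨γ, rfl, hprim, hhyp, hlen, hfst, hsnd⟩
    obtain ⟨A, hA, hΓ, hγA⟩ := exists_mem_normalizedMatrices hs hprim hhyp hlen hfst hsnd
    exact ⟨A, ⟨hA, hΓ, isPrim_of_isConj hγA hprim⟩,
      ConjClasses.mk_eq_mk_iff_isConj.2 hγA.symm⟩
  · rintro ⟨A, ⟨⟨hA, hAs⟩, hΓ, hprim⟩, rfl⟩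
    refine ⟨A, rfl, hprim, (isHyp_coe_iff A).2 ?_, (hA.transLenLE_iff hs).2 hAs,
      ⟨A, .refl _, A, rfl, (amb1_iff A).2 hA.apply_eq⟩, exists_isConj_ambSnd hA.apply_eq hΓ⟩
    rw [hA.trace_eq, lt_abs]
    exact Or.inl (by linarith [hA.one_lt])

/-- The smaller off-diagonal entry, with a sign recording its position, is less than the diagonal
entry and determines the matrix together with it. -/
theorem exists_mapsTo_injOn_normalizedMatrices (N : ℕ) :
    ∃ f : SL(2, ℤ) → ℤ × ℤ, Set.MapsTo f (normalizedMatrices N)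
      (Finset.Icc (0 : ℤ) N ×ˢ Finset.Icc (-N : ℤ) N : Finset (ℤ × ℤ)) ∧
      Set.InjOn f (normalizedMatrices N) := by
  refine ⟨fun A ↦ (A 0 0, if A 0 1 < A 0 0 then A 0 1 else -A 1 0), ?_, ?_⟩
  · rintro A ⟨hA, hAN⟩
    rw [Finset.mem_coe, Finset.mem_product, Finset.mem_Icc, Finset.mem_Icc]
    have := hA.one_lt
    have := hA.pos₀₁
    have := hA.pos₁₀
    have := hA.apply₁₀_lt_iff
    dsimp only
    split_ifs <;> omega
  · rintro A ⟨hA, -⟩ B ⟨hB, -⟩ h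
    obtain ⟨h₀₀, h⟩ := Prod.mk.inj h
    have := hA.pos₀₁
    have := hA.pos₁₀
    have := hB.pos₀₁
    have := hB.pos₁₀
    split_ifs at h
    · exact hA.eq_of_apply₀₁ hB h₀₀ h
    · omega
    · omega
    · exact hA.eq_of_apply₁₀ hB h₀₀ (neg_injective h)

theorem finite_normalizedMatrices (N : ℕ) : (normalizedMatrices N).Finite :=
  let ⟨_, hmaps, hinj⟩ := exists_mapsTo_injOn_normalizedMatrices N
  .of_injOn hmaps hinj (Finset.finite_toSet _)

theorem ncard_normalizedMatrices_le (N : ℕ) :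
    (normalizedMatrices N).ncard ≤ (N + 1) * (2 * N + 1) := by
  obtain ⟨_, hmaps, hinj⟩ := exists_mapsTo_injOn_normalizedMatrices N
  refine (Set.ncard_le_ncard_of_injOn _ hmaps hinj (Finset.finite_toSet _)).trans_eq ?_
  rw [Set.ncard_coe_finset, Finset.card_product, Int.card_Icc, Int.card_Icc]
  congr 1
  omega

theorem ncard_not_isPrim_le (N : ℕ) :
    {A ∈ normalizedMatrices N | ¬IsPrim A}.ncard ≤
      (Nat.log 2 N + 1) * ((N.sqrt + 1) * (2 * N.sqrt + 1)) := by
  have hsub : {A ∈ normalizedMatrices N | ¬IsPrim A} ⊆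
      (fun x : SL(2, ℤ) × ℕ ↦ x.1 ^ x.2) ''
        (normalizedMatrices N.sqrt ×ˢ (Finset.range (Nat.log 2 N + 1) : Set ℕ)) := by
    rintro _ ⟨⟨hA, hAN⟩, hprim⟩
    obtain ⟨D, hD, n, hn, rfl⟩ := hA.exists_pow_eq_of_not_isPrim hprim
    have hpow : D 0 0 ^ n ≤ N := (hD.pow_and_pow_le (by omega)).2.trans hAN
    have h₁ := hD.one_lt
    obtain ⟨d, hd⟩ := Int.eq_ofNat_of_zero_le (zero_le_one.trans h₁.le)
    rw [hd] at hpow h₁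
    norm_cast at hpow h₁
    refine ⟨(D, n), ⟨⟨hD, ?_⟩, ?_⟩, rfl⟩
    · rw [hd, Nat.cast_le, Nat.le_sqrt']
      exact (Nat.pow_le_pow_right h₁.le hn).trans hpow
    · rw [Finset.mem_coe, Finset.mem_range_succ_iff]
      exact Nat.le_log_of_pow_le one_lt_two ((Nat.pow_le_pow_left h₁ n).trans hpow)
  have hfin := (finite_normalizedMatrices N.sqrt).prod
    (Finset.finite_toSet (Finset.range (Nat.log 2 N + 1)))
  refine (Set.ncard_le_ncard hsub (hfin.image _)).trans ((Set.ncard_image_le hfin).trans ?_)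
  rw [Set.ncard_prod, Set.ncard_coe_finset, Finset.card_range, mul_comm]
  gcongr
  exact ncard_normalizedMatrices_le _

end Counting

/-! ### Pairs of simultaneous congruences -/

section Congruences

open Finset

theorem abs_card_Ioc_filter_modEq_sub_le {m : ℕ} (hm : 0 < m) (N r : ℕ) :
    |(#{x ∈ Ioc m N | x ≡ r [MOD m]} : ℝ) - N / m| ≤ 2 := by
  obtain hN | hN := le_or_gt m N
  · have hcard := Nat.Ioc_filter_modEq_card m N hm r
    have hmQ : (0 : ℚ) < m := by exact_mod_cast hm
    have hdiff : ((N : ℚ) - r) / m - (m - r) / m = N / m - 1 := by field_simp; ring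
    have hle : ((m : ℚ) - r) / m ≤ (N - r) / m := by gcongr
    rw [max_eq_left (sub_nonneg.2 (Int.floor_mono hle))] at hcard
    have hcardQ : (#{x ∈ Ioc m N | x ≡ r [MOD m]} : ℚ) =
        ⌊((N : ℚ) - r) / m⌋ - ⌊((m : ℚ) - r) / m⌋ := by exact_mod_cast hcard
    have habs : |(#{x ∈ Ioc m N | x ≡ r [MOD m]} : ℚ) - N / m| ≤ 2 := by
      rw [hcardQ, abs_le]
      constructor <;>
        linarith [Int.floor_le (((N : ℚ) - r) / m), Int.lt_floor_add_one (((N : ℚ) - r) / m),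
          Int.floor_le (((m : ℚ) - r) / m), Int.lt_floor_add_one (((m : ℚ) - r) / m)]
    have habsR := (Rat.cast_le (K := ℝ)).2 habs
    push_cast at habsR
    exact habsR
  · have hdiv : (N : ℝ) / m ≤ 1 := div_le_one_of_le₀ (by exact_mod_cast hN.le) (Nat.cast_nonneg m)
    rw [Ioc_eq_empty_of_le hN.le, filter_empty, card_empty, Nat.cast_zero, zero_sub, abs_neg,
      abs_of_nonneg (by positivity)]
    linarith

theorem abs_card_Ioc_filter_modEq_and_modEq_sub_le {m n : ℕ} (hm : 0 < m) (hn : 0 < n) {r s : ℕ}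
    (h : r ≡ s [MOD m.gcd n]) (N : ℕ) :
    |(#{x ∈ Ioc (m.lcm n) N | x ≡ r [MOD m] ∧ x ≡ s [MOD n]} : ℝ) - N / (m.lcm n : ℕ)| ≤ 2 := by
  obtain ⟨k, hkr, hks⟩ := Nat.chineseRemainder' h
  have hiff : ∀ x, x ≡ r [MOD m] ∧ x ≡ s [MOD n] ↔ x ≡ k [MOD m.lcm n] := fun x ↦
    ⟨fun hx ↦ Nat.mod_lcm (hx.1.trans hkr.symm) (hx.2.trans hks.symm), fun hx ↦
      ⟨(hx.of_dvd (Nat.dvd_lcm_left m n)).trans hkr,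
        (hx.of_dvd (Nat.dvd_lcm_right m n)).trans hks⟩⟩
  simp only [hiff]
  exact abs_card_Ioc_filter_modEq_sub_le (Nat.lcm_pos hm hn) N k

theorem eq_one_of_dvd_of_dvd_add {b k x d : ℕ} (hb : b.Coprime k) (hdb : d ∣ b) (hdx : d ∣ x)
    (hd : d ∣ x + k) : d = 1 :=
  Nat.eq_one_of_dvd_coprimes hb hdb ((Nat.dvd_add_right hdx).1 hd)

theorem coprime_gcd_gcd_add {b k : ℕ} (hb : b.Coprime k) (x : ℕ) :
    (b.gcd x).Coprime (b.gcd (x + k)) := by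
  refine eq_one_of_dvd_of_dvd_add hb ((Nat.gcd_dvd_left _ _).trans (Nat.gcd_dvd_left b x)) ?_
    ((Nat.gcd_dvd_right _ _).trans (Nat.gcd_dvd_right b (x + k)))
  exact (Nat.gcd_dvd_left _ _).trans (Nat.gcd_dvd_right b x)

theorem gcd_mul_gcd_add_eq_of_dvd {b k x : ℕ} (hb : b.Coprime k) (h : b ∣ x * (x + k)) :
    b.gcd x * b.gcd (x + k) = b := by
  refine Nat.dvd_antisymm ((coprime_gcd_gcd_add hb x).mul_dvd_of_dvd_of_dvd
    (Nat.gcd_dvd_left b x) (Nat.gcd_dvd_left b _)) ?_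
  have hgcd := gcd_mul_dvd_mul_gcd b x (x + k)
  rwa [gcd_eq_nat_gcd, Nat.gcd_eq_left h] at hgcd

theorem coprime_of_dvd_add {u v k x : ℕ} (h : (u * v).Coprime k) (hu : u ∣ x) (hv : v ∣ x + k) :
    u.Coprime (x + k) ∧ v.Coprime x :=
  ⟨eq_one_of_dvd_of_dvd_add h ((Nat.gcd_dvd_left _ _).trans (dvd_mul_right u v))
      ((Nat.gcd_dvd_left _ _).trans hu) (Nat.gcd_dvd_right _ _),
    eq_one_of_dvd_of_dvd_add h ((Nat.gcd_dvd_left _ _).trans (dvd_mul_left v u))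
      (Nat.gcd_dvd_right _ _) ((Nat.gcd_dvd_left _ _).trans hv)⟩

theorem gcd_mul_eq_of_dvd_add {u v k x : ℕ} (h : (u * v).Coprime k) (hu : u ∣ x) (hv : v ∣ x + k) :
    (u * v).gcd x = u ∧ (u * v).gcd (x + k) = v := by
  obtain ⟨hux, hvx⟩ := coprime_of_dvd_add h hu hv
  rw [hvx.gcd_mul_right_cancel, hux.gcd_mul_left_cancel]
  exact ⟨Nat.gcd_eq_left hu, Nat.gcd_eq_left hv⟩

end Congruences

section NormalizedPairs

open Finset

open Classical in
/-- The pairs `(a, b)` formed by the diagonal entry and the upper right entry of a normalized matrix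
outside `Γ(2)` whose diagonal entry is at most `N` and exceeds the upper right entry. -/
noncomputable def normalizedPairs (N : ℕ) : Finset (ℕ × ℕ) :=
  {p ∈ Icc 1 N ×ˢ Icc 1 N |
    p.2 < p.1 ∧ ∃ c, p.2 * c + 1 = p.1 * p.1 ∧ (Odd p.2 ∨ Odd c)}

theorem mem_normalizedPairs {N a b : ℕ} :
    (a, b) ∈ normalizedPairs N ↔
      0 < b ∧ b < a ∧ a ≤ N ∧ ∃ c, b * c + 1 = a * a ∧ (Odd b ∨ Odd c) := by
  simp only [normalizedPairs, mem_filter, mem_product, mem_Icc]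
  constructor
  · rintro ⟨⟨⟨-, ha⟩, hb, -⟩, hba, hc⟩
    exact ⟨hb, hba, ha, hc⟩
  · rintro ⟨hb, hba, ha, hc⟩
    exact ⟨⟨⟨by omega, ha⟩, hb, by omega⟩, hba, hc⟩

theorem ncard_apply₀₁_lt (N : ℕ) :
    {A ∈ normalizedMatrices N | A ∉ Gamma 2 ∧ A 0 1 < A 0 0}.ncard = #(normalizedPairs N) := by
  have hinj : Set.InjOn (fun A : SL(2, ℤ) ↦ ((A 0 0).toNat, (A 0 1).toNat))
      {A ∈ normalizedMatrices N | A ∉ Gamma 2 ∧ A 0 1 < A 0 0} := by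
    rintro A ⟨⟨hA, -⟩, -⟩ B ⟨⟨hB, -⟩, -⟩ h
    obtain ⟨h₀₀, h₀₁⟩ := Prod.mk.inj h
    have := hA.one_lt
    have := hA.pos₀₁
    have := hB.one_lt
    have := hB.pos₀₁
    exact hA.eq_of_apply₀₁ hB (by omega) (by omega)
  rw [← hinj.ncard_image, ← Set.ncard_coe_finset]
  congr 1
  ext ⟨a, b⟩
  rw [mem_coe, mem_normalizedPairs]
  constructor
  · rintro ⟨A, ⟨⟨hA, hAN⟩, hΓ, hlt⟩, hab⟩
    obtain ⟨rfl, rfl⟩ := Prod.mk.inj hab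
    have h₀₀ := hA.one_lt
    have h₀₁ := hA.pos₀₁
    have h₁₀ := hA.pos₁₀
    have hbc := hA.mul_add_one_eq
    rw [hA.mem_Gamma_two_iff, not_and_or, Int.not_even_iff_odd, Int.not_even_iff_odd] at hΓ
    generalize A 0 0 = a, A 0 1 = b, A 1 0 = c at *
    lift a to ℕ using by omega
    lift b to ℕ using by omega
    lift c to ℕ using by omega
    norm_cast at *
    exact ⟨h₀₁, hlt, hAN, c, hbc, hΓ⟩
  · rintro ⟨hb, hba, haN, c, hbc, hodd⟩
    obtain ⟨A, hA, h₀₀, h₀₁, h₁₀⟩ := exists_isNormalized_of_mul_add_one_eq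
      (a := a) (b := b) (c := c) (by omega) (by omega) (by exact_mod_cast hbc)
    refine ⟨A, ⟨⟨hA, by omega⟩, ?_, by omega⟩, by simp [h₀₀, h₀₁]⟩
    rw [hA.mem_Gamma_two_iff, not_and_or, Int.not_even_iff_odd, Int.not_even_iff_odd, h₀₁, h₁₀]
    exact_mod_cast hodd

theorem ncard_notMem_Gamma_two (N : ℕ) :
    {A ∈ normalizedMatrices N | A ∉ Gamma 2}.ncard = 2 * #(normalizedPairs N) := by
  set S := {A ∈ normalizedMatrices N | A ∉ Gamma 2}
  have hfin : S.Finite := (finite_normalizedMatrices N).subset (Set.sep_subset _ _)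
  have hinv : Function.Involutive (SpecialLinearGroup.transpose : SL(2, ℤ) → SL(2, ℤ)) :=
    fun A ↦ Subtype.ext (transpose_transpose A.1)
  have hmaps : ∀ A ∈ S, A.transpose ∈ S := fun A ⟨hA, hΓ⟩ ↦
    ⟨⟨hA.1.transpose, hA.2⟩, fun h ↦ hΓ (hA.1.transpose_mem_Gamma_two_iff.1 h)⟩
  have himage : SpecialLinearGroup.transpose '' {A ∈ S | ¬A 0 1 < A 0 0} =
      {A ∈ S | A 0 1 < A 0 0} := by
    rw [hinv.image_eq_preimage_symm]
    ext A
    refine ⟨fun ⟨hA, hlt⟩ ↦ ?_, fun ⟨hA, hlt⟩ ↦ ⟨hmaps A hA, ?_⟩⟩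
    · have := hmaps _ hA
      rw [hinv A] at this
      exact ⟨this, this.1.1.transpose.apply₁₀_lt_iff.2 (not_lt.1 hlt)⟩
    · exact not_lt.2 (hA.1.1.transpose.apply₁₀_lt_iff.1 hlt)
  have hsep : {A ∈ S | A 0 1 < A 0 0} =
      {A ∈ normalizedMatrices N | A ∉ Gamma 2 ∧ A 0 1 < A 0 0} := by
    ext A
    exact and_assoc
  calc S.ncard = {A ∈ S | A 0 1 < A 0 0}.ncard + {A ∈ S | ¬A 0 1 < A 0 0}.ncard :=
        (Set.ncard_inter_add_ncard_sdiff_eq_ncard S {A | A 0 1 < A 0 0} hfin).symm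
    _ = 2 * #(normalizedPairs N) := by
        rw [← hinv.injective.injOn.ncard_image (s := {A ∈ S | ¬A 0 1 < A 0 0}), himage, hsep,
          ncard_apply₀₁_lt, two_mul]

end NormalizedPairs

section HyperbolaPairs

open Finset

/-- The pairs of positive integers under the hyperbola `u * v = N`. -/
def hyperbolaPairs (N : ℕ) : Finset (ℕ × ℕ) :=
  {p ∈ Icc 1 N ×ˢ Icc 1 N | p.1 * p.2 ≤ N}

theorem mem_hyperbolaPairs {N u v : ℕ} :
    (u, v) ∈ hyperbolaPairs N ↔ 0 < u ∧ 0 < v ∧ u * v ≤ N := by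
  simp only [hyperbolaPairs, mem_filter, mem_product, mem_Icc]
  constructor
  · rintro ⟨⟨⟨hu, -⟩, hv, -⟩, h⟩
    exact ⟨hu, hv, h⟩
  · rintro ⟨hu, hv, h⟩
    exact ⟨⟨⟨hu, by nlinarith⟩, hv, by nlinarith⟩, h⟩

theorem add_one_modEq_one_iff {u x : ℕ} : x + 1 ≡ 1 [MOD u] ↔ u ∣ x :=
  ⟨fun h ↦ Nat.modEq_zero_iff_dvd.1 (Nat.ModEq.add_right_cancel' 1 h),
    fun h ↦ (Nat.modEq_zero_iff_dvd.2 h).add_right 1⟩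

theorem modEq_sub_one_iff {v x : ℕ} (hv : 0 < v) : x ≡ v - 1 [MOD v] ↔ v ∣ x + 1 := by
  have hv' : v - 1 + 1 ≡ 0 [MOD v] := by
    rw [Nat.sub_add_cancel hv]
    exact Nat.modEq_zero_iff_dvd.2 dvd_rfl
  exact ⟨fun h ↦ Nat.modEq_zero_iff_dvd.1 ((h.add_right 1).trans hv'),
    fun h ↦ Nat.ModEq.add_right_cancel' 1 ((Nat.modEq_zero_iff_dvd.2 h).trans hv'.symm)⟩

theorem gcd_mul_gcd_add_two_eq {b c x : ℕ} (hb : Odd b) (h : b * c + 1 = (x + 1) * (x + 1)) :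
    b.gcd x * b.gcd (x + 2) = b :=
  gcd_mul_gcd_add_eq_of_dvd (Nat.coprime_two_right.2 hb) ⟨c, by linarith⟩

theorem card_filter_odd_normalizedPairs (N : ℕ) :
    #{q ∈ normalizedPairs N | Odd q.2} =
      ∑ p ∈ hyperbolaPairs N with p.1.Coprime p.2 ∧ Odd (p.1 * p.2),
        #{a ∈ Ioc (p.1 * p.2) N | a ≡ 1 [MOD p.1] ∧ a ≡ p.2 - 1 [MOD p.2]} := by
  rw [← card_sigma]
  refine card_nbij' (fun q ↦ ⟨(q.2.gcd (q.1 - 1), q.2.gcd (q.1 - 1 + 2)), q.1⟩)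
    (fun y ↦ (y.2, y.1.1 * y.1.2)) ?_ ?_ ?_ ?_
  · rintro ⟨a, b⟩ h
    simp only [mem_coe, mem_filter, mem_sigma, mem_normalizedPairs, mem_hyperbolaPairs,
      mem_Ioc] at h ⊢
    obtain ⟨⟨hb, hba, haN, c, hbc, -⟩, hodd⟩ := h
    obtain ⟨x, rfl⟩ : ∃ x, a = x + 1 := ⟨a - 1, by omega⟩
    have hpos : ∀ y, 0 < b.gcd y := fun y ↦ Nat.gcd_pos_of_pos_left y hb
    rw [Nat.add_sub_cancel, gcd_mul_gcd_add_two_eq hodd hbc, add_one_modEq_one_iff,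
      modEq_sub_one_iff (hpos _)]
    exact ⟨⟨⟨hpos _, hpos _, by omega⟩, coprime_gcd_gcd_add (Nat.coprime_two_right.2 hodd) x, hodd⟩,
      ⟨hba, haN⟩, Nat.gcd_dvd_right _ _, Nat.gcd_dvd_right _ _⟩
  · rintro ⟨⟨u, v⟩, a⟩ h
    simp only [mem_coe, mem_filter, mem_sigma, mem_normalizedPairs, mem_hyperbolaPairs,
      mem_Ioc] at h ⊢
    obtain ⟨⟨⟨hu, hv, -⟩, -, hodd⟩, ⟨hlt, haN⟩, hau, hav⟩ := h
    obtain ⟨x, rfl⟩ : ∃ x, a = x + 1 := ⟨a - 1, by omega⟩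
    rw [add_one_modEq_one_iff] at hau
    rw [modEq_sub_one_iff hv] at hav
    obtain ⟨c, hc⟩ := mul_dvd_mul hau hav
    exact ⟨⟨Nat.mul_pos hu hv, hlt, haN, c, by linarith, Or.inl hodd⟩, hodd⟩
  · rintro ⟨a, b⟩ h
    simp only [mem_coe, mem_filter, mem_normalizedPairs] at h ⊢
    obtain ⟨⟨hb, hba, haN, c, hbc, -⟩, hodd⟩ := h
    obtain ⟨x, rfl⟩ : ∃ x, a = x + 1 := ⟨a - 1, by omega⟩
    rw [Nat.add_sub_cancel, gcd_mul_gcd_add_two_eq hodd hbc]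
  · rintro ⟨⟨u, v⟩, a⟩ h
    simp only [mem_coe, mem_filter, mem_sigma, mem_hyperbolaPairs, mem_Ioc] at h ⊢
    obtain ⟨⟨⟨-, hv, -⟩, -, hodd⟩, ⟨hlt, haN⟩, hau, hav⟩ := h
    obtain ⟨x, rfl⟩ : ∃ x, a = x + 1 := ⟨a - 1, by omega⟩
    rw [add_one_modEq_one_iff] at hau
    rw [modEq_sub_one_iff hv] at hav
    obtain ⟨hgu, hgv⟩ := gcd_mul_eq_of_dvd_add (Nat.coprime_two_right.2 hodd) hau hav
    rw [Nat.add_sub_cancel, hgu, hgv]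

theorem exists_eq_four_mul_of_even {a b c : ℕ} (hb : Even b) (hc : Odd c)
    (h : b * c + 1 = a * a) : ∃ x d, a = 2 * x + 1 ∧ b = 4 * d ∧ d * c = x * (x + 1) := by
  have ha : Odd a := by
    have := (hb.mul_right c).add_one
    rw [h] at this
    exact (Nat.odd_mul.1 this).1
  obtain ⟨x, rfl⟩ := ha
  have hbc : b * c = 4 * (x * (x + 1)) := by linarith
  have hcop : Nat.Coprime 4 c := (Nat.coprime_two_left.2 hc).pow_left 2
  obtain ⟨d, rfl⟩ := hcop.dvd_of_dvd_mul_right ⟨_, hbc⟩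
  exact ⟨x, d, rfl, rfl, by linarith⟩

theorem two_mul_add_one_modEq_iff {u x : ℕ} (hu : 0 < u) :
    2 * x + 1 ≡ 2 * u + 1 [MOD 4 * u] ↔ ∃ m, Odd m ∧ x = u * m := by
  have hcancel : 2 * x + 1 ≡ 2 * u + 1 [MOD 4 * u] ↔ x ≡ u [MOD 2 * u] := by
    rw [show 4 * u = 2 * (2 * u) by ring, ← Nat.ModEq.mul_left_cancel_iff' two_ne_zero (a := x)]
    exact ⟨Nat.ModEq.add_right_cancel' 1, .add_right 1⟩
  rw [hcancel]
  constructor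
  · intro h
    obtain ⟨m, rfl⟩ : u ∣ x :=
      (h.of_dvd (dvd_mul_left u 2)).dvd_iff dvd_rfl |>.2 dvd_rfl
    have hm : u * m ≡ u * 1 [MOD u * 2] := by rwa [mul_one, mul_comm u 2]
    exact ⟨m, Nat.odd_iff.2 (Nat.ModEq.mul_left_cancel' hu.ne' hm), rfl⟩
  · rintro ⟨_, ⟨q, rfl⟩, rfl⟩
    rw [show u * (2 * q + 1) = u + 2 * u * q by ring]
    exact Nat.add_mul_mod_self_left u (2 * u) q

theorem two_mul_add_one_modEq_sub_one_iff {v x : ℕ} (hv : 0 < v) :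
    2 * x + 1 ≡ 2 * v - 1 [MOD 4 * v] ↔ ∃ m, Odd m ∧ x + 1 = v * m := by
  rw [← two_mul_add_one_modEq_iff hv, show 2 * (x + 1) + 1 = 2 * x + 1 + 2 by ring,
    show 2 * v + 1 = 2 * v - 1 + 2 by omega]
  exact ⟨.add_right 2, Nat.ModEq.add_right_cancel' 2⟩

theorem exists_eq_gcd_mul_odd {c d x : ℕ} (hd : 0 < d) (hc : Odd c) (h : d * c = x * (x + 1)) :
    (∃ m, Odd m ∧ x = d.gcd x * m) ∧ ∃ n, Odd n ∧ x + 1 = d.gcd (x + 1) * n := by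
  obtain ⟨m, hm⟩ := Nat.gcd_dvd_right d x
  obtain ⟨n, hn⟩ := Nat.gcd_dvd_right d (x + 1)
  have hmn : Odd (m * n) := by
    suffices m * n = c from this ▸ hc
    refine Nat.eq_of_mul_eq_mul_left hd ?_
    calc d * (m * n) = d.gcd x * d.gcd (x + 1) * (m * n) := by
          rw [gcd_mul_gcd_add_eq_of_dvd d.coprime_one_right ⟨c, h.symm⟩]
      _ = d.gcd x * m * (d.gcd (x + 1) * n) := by ring
      _ = d * c := by rw [← hm, ← hn, h]
  exact ⟨⟨m, (Nat.odd_mul.1 hmn).1, hm⟩, n, (Nat.odd_mul.1 hmn).2, hn⟩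

theorem odd_of_modEq {a u : ℕ} (h : a ≡ 2 * u + 1 [MOD 4 * u]) : Odd a := by
  have h₂ := h.of_dvd (⟨2 * u, by ring⟩ : 2 ∣ 4 * u)
  rw [Nat.odd_iff, h₂]
  omega

theorem exists_odd_mul_add_one_eq_of_modEq {a u v : ℕ} (hu : 0 < u) (hv : 0 < v)
    (hau : a ≡ 2 * u + 1 [MOD 4 * u]) (hav : a ≡ 2 * v - 1 [MOD 4 * v]) :
    ∃ c, Odd c ∧ 4 * (u * v) * c + 1 = a * a := by
  obtain ⟨x, rfl⟩ := odd_of_modEq hau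
  obtain ⟨m, hm, hxm⟩ := (two_mul_add_one_modEq_iff hu).1 hau
  obtain ⟨n, hn, hxn⟩ := (two_mul_add_one_modEq_sub_one_iff hv).1 hav
  refine ⟨m * n, hm.mul hn, ?_⟩
  calc 4 * (u * v) * (m * n) + 1 = 4 * (u * m * (v * n)) + 1 := by ring
    _ = (2 * x + 1) * (2 * x + 1) := by rw [← hxm, ← hxn]; ring

theorem gcd_mul_half_eq_of_modEq {a u v : ℕ} (hu : 0 < u) (hv : 0 < v)
    (hau : a ≡ 2 * u + 1 [MOD 4 * u]) (hav : a ≡ 2 * v - 1 [MOD 4 * v]) :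
    (u * v).gcd (a / 2) = u ∧ (u * v).gcd (a / 2 + 1) = v := by
  obtain ⟨x, rfl⟩ := odd_of_modEq hau
  obtain ⟨m, -, hxm⟩ := (two_mul_add_one_modEq_iff hu).1 hau
  obtain ⟨n, -, hxn⟩ := (two_mul_add_one_modEq_sub_one_iff hv).1 hav
  rw [show (2 * x + 1) / 2 = x by omega]
  exact gcd_mul_eq_of_dvd_add (u * v).coprime_one_right ⟨m, hxm⟩ ⟨n, hxn⟩

theorem four_mul_gcd_half_mul_gcd_half_add_one {a b c : ℕ} (hb : Even b) (hc : Odd c)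
    (h : b * c + 1 = a * a) : 4 * ((b / 4).gcd (a / 2) * (b / 4).gcd (a / 2 + 1)) = b := by
  obtain ⟨x, d, rfl, rfl, hdc⟩ := exists_eq_four_mul_of_even hb hc h
  rw [show 4 * d / 4 = d by omega, show (2 * x + 1) / 2 = x by omega,
    gcd_mul_gcd_add_eq_of_dvd d.coprime_one_right ⟨c, hdc.symm⟩]

theorem even_div_four {a b c : ℕ} (hb : Even b) (hc : Odd c) (h : b * c + 1 = a * a) :
    Even (b / 4) := by
  obtain ⟨x, d, -, rfl, hdc⟩ := exists_eq_four_mul_of_even hb hc h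
  rw [Nat.mul_div_cancel_left d four_pos]
  have hdc' : Even (d * c) := hdc ▸ Nat.even_mul_succ_self x
  exact (Nat.even_mul.1 hdc').resolve_right (Nat.not_even_iff_odd.2 hc)

theorem modEq_gcd_half {a b c : ℕ} (hb₀ : 0 < b) (hb : Even b) (hc : Odd c)
    (h : b * c + 1 = a * a) :
    a ≡ 2 * (b / 4).gcd (a / 2) + 1 [MOD 4 * (b / 4).gcd (a / 2)] ∧
      a ≡ 2 * (b / 4).gcd (a / 2 + 1) - 1 [MOD 4 * (b / 4).gcd (a / 2 + 1)] := by
  obtain ⟨x, d, rfl, rfl, hdc⟩ := exists_eq_four_mul_of_even hb hc h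
  have hd : 0 < d := by omega
  have hpos : ∀ y, 0 < d.gcd y := fun y ↦ Nat.gcd_pos_of_pos_left y hd
  rw [show 4 * d / 4 = d by omega, show (2 * x + 1) / 2 = x by omega,
    two_mul_add_one_modEq_iff (hpos _), two_mul_add_one_modEq_sub_one_iff (hpos _)]
  exact exists_eq_gcd_mul_odd hd hc hdc

theorem card_filter_not_odd_normalizedPairs (N : ℕ) :
    #{q ∈ normalizedPairs N | ¬Odd q.2} =
      ∑ p ∈ hyperbolaPairs (N / 4) with p.1.Coprime p.2 ∧ ¬Odd (p.1 * p.2),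
        #{a ∈ Ioc (4 * (p.1 * p.2)) N |
          a ≡ 2 * p.1 + 1 [MOD 4 * p.1] ∧ a ≡ 2 * p.2 - 1 [MOD 4 * p.2]} := by
  rw [← card_sigma]
  refine card_nbij' (fun q ↦ ⟨((q.2 / 4).gcd (q.1 / 2), (q.2 / 4).gcd (q.1 / 2 + 1)), q.1⟩)
    (fun y ↦ (y.2, 4 * (y.1.1 * y.1.2))) ?_ ?_ ?_ ?_
  · rintro ⟨a, b⟩ h
    simp only [mem_coe, mem_filter, mem_sigma, mem_normalizedPairs, mem_hyperbolaPairs,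
      mem_Ioc] at h ⊢
    obtain ⟨⟨hb, hba, haN, c, hbc, hor⟩, hodd⟩ := h
    have hc := hor.resolve_left hodd
    have heven := Nat.not_odd_iff_even.1 hodd
    have hprod := four_mul_gcd_half_mul_gcd_half_add_one heven hc hbc
    have hdiv : (b / 4).gcd (a / 2) * (b / 4).gcd (a / 2 + 1) = b / 4 := by omega
    have hpos : ∀ y, 0 < (b / 4).gcd y := fun y ↦ Nat.gcd_pos_of_pos_left y (by omega)
    rw [hprod, hdiv]
    exact ⟨⟨⟨hpos _, hpos _, by omega⟩, coprime_gcd_gcd_add (b / 4).coprime_one_right (a / 2),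
      Nat.not_odd_iff_even.2 (even_div_four heven hc hbc)⟩, ⟨hba, haN⟩,
      modEq_gcd_half hb heven hc hbc⟩
  · rintro ⟨⟨u, v⟩, a⟩ h
    simp only [mem_coe, mem_filter, mem_sigma, mem_normalizedPairs, mem_hyperbolaPairs,
      mem_Ioc] at h ⊢
    obtain ⟨⟨⟨hu, hv, -⟩, -, -⟩, ⟨hlt, haN⟩, hau, hav⟩ := h
    obtain ⟨c, hc, huvc⟩ := exists_odd_mul_add_one_eq_of_modEq hu hv hau hav
    exact ⟨⟨by positivity, hlt, haN, c, huvc, Or.inr hc⟩,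
      Nat.not_odd_iff_even.2 ⟨2 * (u * v), by ring⟩⟩
  · rintro ⟨a, b⟩ h
    simp only [mem_coe, mem_filter, mem_normalizedPairs] at h ⊢
    obtain ⟨⟨-, -, -, c, hbc, hor⟩, hodd⟩ := h
    rw [four_mul_gcd_half_mul_gcd_half_add_one (Nat.not_odd_iff_even.1 hodd)
      (hor.resolve_left hodd) hbc]
  · rintro ⟨⟨u, v⟩, a⟩ h
    simp only [mem_coe, mem_filter, mem_sigma, mem_hyperbolaPairs, mem_Ioc] at h ⊢
    obtain ⟨⟨⟨hu, hv, -⟩, -⟩, -, hau, hav⟩ := h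
    obtain ⟨hgu, hgv⟩ := gcd_mul_half_eq_of_modEq hu hv hau hav
    rw [Nat.mul_div_cancel_left _ four_pos, hgu, hgv]

end HyperbolaPairs

/-! ### Sums over the lattice points under a hyperbola -/

section HyperbolaSums

open Finset
open scoped ArithmeticFunction.Moebius

/-- The sum of `f (u * v)` over the pairs of positive integers with `u * v ≤ N`. -/
def hyperbolaSum (f : ℕ → ℝ) (N : ℕ) : ℝ :=
  ∑ p ∈ hyperbolaPairs N, f (p.1 * p.2)

/-- The sum of `f (u * v)` over the pairs of coprime positive integers with `u * v ≤ N`. -/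
def coprimeHyperbolaSum (f : ℕ → ℝ) (N : ℕ) : ℝ :=
  ∑ p ∈ hyperbolaPairs N with p.1.Coprime p.2, f (p.1 * p.2)

/-- The completely multiplicative function `n ↦ 1 / n` restricted to the odd integers. -/
noncomputable def oddInv (n : ℕ) : ℝ :=
  if Odd n then (n : ℝ)⁻¹ else 0

theorem oddInv_mul (m n : ℕ) : oddInv (m * n) = oddInv m * oddInv n := by
  by_cases hm : Odd m <;> by_cases hn : Odd n <;> simp [oddInv, Nat.odd_mul, hm, hn, mul_comm]

theorem abs_oddInv_le (n : ℕ) : |oddInv n| ≤ (n : ℝ)⁻¹ := by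
  unfold oddInv
  split_ifs <;> simp

theorem sum_filter_odd_eq_coprimeHyperbolaSum (N : ℕ) :
    ∑ p ∈ hyperbolaPairs N with p.1.Coprime p.2 ∧ Odd (p.1 * p.2), ((p.1 * p.2 : ℕ) : ℝ)⁻¹ =
      coprimeHyperbolaSum oddInv N := by
  rw [← filter_filter, sum_filter]
  rfl

theorem sum_filter_not_odd_eq_coprimeHyperbolaSum_sub (N : ℕ) :
    ∑ p ∈ hyperbolaPairs N with p.1.Coprime p.2 ∧ ¬Odd (p.1 * p.2), ((p.1 * p.2 : ℕ) : ℝ)⁻¹ =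
      coprimeHyperbolaSum (fun n ↦ (n : ℝ)⁻¹) N - coprimeHyperbolaSum oddInv N := by
  rw [eq_sub_iff_add_eq', ← sum_filter_odd_eq_coprimeHyperbolaSum, ← filter_filter,
    ← filter_filter, sum_filter_add_sum_filter_not]
  rfl

theorem abs_card_filter_odd_normalizedPairs_sub_le (N : ℕ) :
    |(#{q ∈ normalizedPairs N | Odd q.2} : ℝ) - N * coprimeHyperbolaSum oddInv N| ≤
      #(hyperbolaPairs N) * 2 := by
  rw [card_filter_odd_normalizedPairs, ← sum_filter_odd_eq_coprimeHyperbolaSum, mul_sum,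
    Nat.cast_sum, ← sum_sub_distrib]
  refine (abs_sum_le_sum_abs _ _).trans <| (sum_le_card_nsmul _ _ 2 ?_).trans ?_
  · rintro ⟨u, v⟩ h
    obtain ⟨hmem, hcop, -⟩ := mem_filter.1 h
    obtain ⟨hu, hv, -⟩ := mem_hyperbolaPairs.1 hmem
    have hmod : 1 ≡ v - 1 [MOD u.gcd v] := by
      rw [hcop]
      exact Nat.modEq_one
    simpa only [hcop.lcm_eq_mul, div_eq_mul_inv]
      using abs_card_Ioc_filter_modEq_and_modEq_sub_le hu hv hmod N
  · rw [nsmul_eq_mul]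
    gcongr
    exact filter_subset _ _

theorem odd_add_of_coprime_of_not_odd_mul {u v : ℕ} (h : u.Coprime v) (hodd : ¬Odd (u * v)) :
    Odd (u + v) := by
  rw [Nat.odd_mul, not_and_or, Nat.not_odd_iff_even, Nat.not_odd_iff_even] at hodd
  obtain hu | hv := hodd
  · exact hu.add_odd (Nat.coprime_two_left.1 (h.coprime_dvd_left hu.two_dvd))
  · exact (Nat.coprime_two_right.1 (h.coprime_dvd_right hv.two_dvd)).add_even hv

theorem two_mul_add_one_modEq_of_odd_add {u v : ℕ} (hv : 0 < v) (h : Odd (u + v)) :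
    2 * u + 1 ≡ 2 * v - 1 [MOD 4] := by
  obtain ⟨k, hk⟩ := h
  unfold Nat.ModEq
  omega

theorem hyperbolaPairs_subset_hyperbolaPairs {M N : ℕ} (h : M ≤ N) :
    hyperbolaPairs M ⊆ hyperbolaPairs N := fun p hp ↦ by
  obtain ⟨hu, hv, huv⟩ := mem_hyperbolaPairs.1 hp
  exact mem_hyperbolaPairs.2 ⟨hu, hv, huv.trans h⟩

theorem abs_card_filter_not_odd_normalizedPairs_sub_le (N : ℕ) :
    |(#{q ∈ normalizedPairs N | ¬Odd q.2} : ℝ) - N / 4 *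
        (coprimeHyperbolaSum (fun n ↦ (n : ℝ)⁻¹) (N / 4) - coprimeHyperbolaSum oddInv (N / 4))| ≤
      #(hyperbolaPairs N) * 2 := by
  rw [card_filter_not_odd_normalizedPairs, ← sum_filter_not_odd_eq_coprimeHyperbolaSum_sub,
    mul_sum, Nat.cast_sum, ← sum_sub_distrib]
  refine (abs_sum_le_sum_abs _ _).trans <| (sum_le_card_nsmul _ _ 2 ?_).trans ?_
  · rintro ⟨u, v⟩ h
    obtain ⟨hmem, hcop, hodd⟩ := mem_filter.1 h
    obtain ⟨hu, hv, -⟩ := mem_hyperbolaPairs.1 hmem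
    have hmod : 2 * u + 1 ≡ 2 * v - 1 [MOD (4 * u).gcd (4 * v)] := by
      rw [Nat.gcd_mul_left, hcop, mul_one]
      exact two_mul_add_one_modEq_of_odd_add hv (odd_add_of_coprime_of_not_odd_mul hcop hodd)
    have hlcm : (4 * u).lcm (4 * v) = 4 * (u * v) := by rw [Nat.lcm_mul_left, hcop.lcm_eq_mul]
    have hweight : (N : ℝ) / 4 * ((u * v : ℕ) : ℝ)⁻¹ = N / ((4 * (u * v) : ℕ) : ℝ) := by
      push_cast
      field_simp
    rw [hweight, ← hlcm]
    exact abs_card_Ioc_filter_modEq_and_modEq_sub_le (by positivity) (by positivity) hmod N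
  · rw [nsmul_eq_mul]
    gcongr
    exact (filter_subset _ _).trans (hyperbolaPairs_subset_hyperbolaPairs (Nat.div_le_self N 4))

theorem abs_card_normalizedPairs_sub_le (N : ℕ) :
    |(#(normalizedPairs N) : ℝ) - N * (coprimeHyperbolaSum oddInv N + 4⁻¹ *
        (coprimeHyperbolaSum (fun n ↦ (n : ℝ)⁻¹) (N / 4) - coprimeHyperbolaSum oddInv (N / 4)))| ≤
      #(hyperbolaPairs N) * 4 := by
  rw [← card_filter_add_card_filter_not (fun q : ℕ × ℕ ↦ Odd q.2), Nat.cast_add]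
  have hodd := abs_le.1 (abs_card_filter_odd_normalizedPairs_sub_le N)
  have heven := abs_le.1 (abs_card_filter_not_odd_normalizedPairs_sub_le N)
  exact abs_le.2 ⟨by linarith, by linarith⟩

theorem sum_hyperbolaPairs (g : ℕ × ℕ → ℝ) (N : ℕ) :
    ∑ p ∈ hyperbolaPairs N, g p = ∑ u ∈ Icc 1 N, ∑ v ∈ Icc 1 (N / u), g (u, v) := by
  refine sum_finset_product _ _ _ fun ⟨u, v⟩ ↦ ?_
  simp only [mem_hyperbolaPairs, mem_Icc]
  constructor
  · rintro ⟨hu, hv, huv⟩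
    exact ⟨⟨hu, by nlinarith⟩, hv, (Nat.le_div_iff_mul_le hu).2 (by linarith)⟩
  · rintro ⟨⟨hu, -⟩, hv, huv⟩
    exact ⟨hu, hv, by linarith [(Nat.le_div_iff_mul_le hu).1 huv]⟩

theorem cast_harmonic_eq_sum_Icc (N : ℕ) : (harmonic N : ℝ) = ∑ u ∈ Icc 1 N, (u : ℝ)⁻¹ := by
  rw [harmonic_eq_sum_Icc]
  push_cast
  rfl

theorem card_hyperbolaPairs_le (N : ℕ) : (#(hyperbolaPairs N) : ℝ) ≤ N * (1 + Real.log N) :=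
  calc (#(hyperbolaPairs N) : ℝ) = ∑ u ∈ Icc 1 N, ((N / u : ℕ) : ℝ) := by
        rw [← nsmul_one, ← sum_const, sum_hyperbolaPairs]
        simp
    _ ≤ ∑ u ∈ Icc 1 N, N * (u : ℝ)⁻¹ := sum_le_sum fun u _ ↦ Nat.cast_div_le
    _ = N * harmonic N := by rw [← mul_sum, cast_harmonic_eq_sum_Icc]
    _ ≤ N * (1 + Real.log N) := by
        gcongr
        exact harmonic_le_one_add_log N

theorem sum_filter_dvd_hyperbolaPairs {f : ℕ → ℝ} (hf : ∀ m n, f (m * n) = f m * f n) {d e : ℕ}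
    (hd : 0 < d) (he : 0 < e) (N : ℕ) :
    ∑ p ∈ hyperbolaPairs N with d ∣ p.1 ∧ e ∣ p.2, f (p.1 * p.2) =
      f (d * e) * hyperbolaSum f (N / (d * e)) := by
  rw [hyperbolaSum, mul_sum]
  symm
  refine sum_bij (fun p _ ↦ (d * p.1, e * p.2)) ?_ ?_ ?_ ?_
  · rintro ⟨u, v⟩ h
    rw [mem_hyperbolaPairs, Nat.le_div_iff_mul_le (by positivity)] at h
    obtain ⟨hu, hv, huv⟩ := h
    exact mem_filter.2 ⟨mem_hyperbolaPairs.2 ⟨by positivity, by positivity, by linarith⟩,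
      dvd_mul_right d u, dvd_mul_right e v⟩
  · rintro ⟨u, v⟩ - ⟨u', v'⟩ - h
    simpa [hd.ne', he.ne'] using h
  · rintro ⟨_, _⟩ h
    obtain ⟨hmem, ⟨u, rfl⟩, v, rfl⟩ := mem_filter.1 h
    obtain ⟨hu, hv, huv⟩ := mem_hyperbolaPairs.1 hmem
    refine ⟨(u, v), mem_hyperbolaPairs.2 ⟨pos_of_mul_pos_right hu d.zero_le,
      pos_of_mul_pos_right hv e.zero_le, ?_⟩, rfl⟩
    rw [Nat.le_div_iff_mul_le (by positivity)]
    linarith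
  · rintro ⟨u, v⟩ -
    rw [← hf]
    ring_nf

theorem hyperbolaSum_oddInv (N : ℕ) :
    hyperbolaSum oddInv N = hyperbolaSum (fun n ↦ (n : ℝ)⁻¹) N -
      hyperbolaSum (fun n ↦ (n : ℝ)⁻¹) (N / 2) +
        4⁻¹ * hyperbolaSum (fun n ↦ (n : ℝ)⁻¹) (N / 4) := by
  have hscale {d e : ℕ} (hd : 0 < d) (he : 0 < e) := sum_filter_dvd_hyperbolaPairs
    (f := fun n ↦ (n : ℝ)⁻¹) (fun m n ↦ by rw [Nat.cast_mul, mul_inv]) hd he N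
  have hleft := hscale (d := 2) (e := 1) two_pos one_pos
  have hright := hscale (d := 1) (e := 2) one_pos two_pos
  have hboth := hscale (d := 2) (e := 2) two_pos two_pos
  rw [sum_filter] at hleft hright hboth
  have hpoint (u v : ℕ) : oddInv (u * v) = ((u * v : ℕ) : ℝ)⁻¹ -
      (if 2 ∣ u ∧ 1 ∣ v then ((u * v : ℕ) : ℝ)⁻¹ else 0) -
      (if 1 ∣ u ∧ 2 ∣ v then ((u * v : ℕ) : ℝ)⁻¹ else 0) +
      (if 2 ∣ u ∧ 2 ∣ v then ((u * v : ℕ) : ℝ)⁻¹ else 0) := by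
    have hodd : Odd (u * v) ↔ ¬2 ∣ u ∧ ¬2 ∣ v := by
      rw [Nat.odd_mul, ← even_iff_two_dvd, ← even_iff_two_dvd, Nat.not_even_iff_odd,
        Nat.not_even_iff_odd]
    simp only [oddInv, hodd, one_dvd, and_true, true_and]
    by_cases hu : 2 ∣ u <;> by_cases hv : 2 ∣ v <;> simp [hu, hv]
  simp only [hyperbolaSum, hpoint, sum_add_distrib, sum_sub_distrib] at hleft hright hboth ⊢
  rw [hleft, hright, hboth]
  norm_num
  ring

theorem sum_divisors_moebius {n : ℕ} : ∑ d ∈ n.divisors, (μ d : ℝ) = if n = 1 then 1 else 0 := by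
  rw [← ArithmeticFunction.one_apply, ← ArithmeticFunction.coe_moebius_mul_coe_zeta,
    ArithmeticFunction.coe_mul_zeta_apply]
  rfl

theorem sum_moebius_eq_ite_coprime {u v N : ℕ} (h : (u, v) ∈ hyperbolaPairs N) :
    ∑ d ∈ Icc 1 N with d ∣ u ∧ d ∣ v, (μ d : ℝ) = if u.Coprime v then 1 else 0 := by
  obtain ⟨hu, hv, huv⟩ := mem_hyperbolaPairs.1 h
  have hdiv : {d ∈ Icc 1 N | d ∣ u ∧ d ∣ v} = (u.gcd v).divisors := by
    ext d
    simp only [mem_filter, mem_Icc, Nat.mem_divisors, Nat.dvd_gcd_iff, ne_eq, Nat.gcd_eq_zero_iff,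
      hu.ne', false_and, not_false_eq_true, and_true, and_iff_right_iff_imp]
    rintro ⟨hdu, -⟩
    exact ⟨Nat.pos_of_dvd_of_pos hdu hu, (Nat.le_of_dvd hu hdu).trans (by nlinarith)⟩
  rw [hdiv, sum_divisors_moebius]

theorem coprimeHyperbolaSum_eq_sum_moebius {f : ℕ → ℝ} (hf : ∀ m n, f (m * n) = f m * f n)
    (N : ℕ) :
    coprimeHyperbolaSum f N =
      ∑ d ∈ Icc 1 N, μ d * f d ^ 2 * hyperbolaSum f (N / (d * d)) := by
  calc coprimeHyperbolaSum f N
      = ∑ p ∈ hyperbolaPairs N, ∑ d ∈ Icc 1 N,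
          if d ∣ p.1 ∧ d ∣ p.2 then μ d * f (p.1 * p.2) else 0 := by
        rw [coprimeHyperbolaSum, sum_filter]
        refine sum_congr rfl fun p hp ↦ ?_
        rw [← sum_filter, ← sum_mul, sum_moebius_eq_ite_coprime hp, ite_mul, one_mul, zero_mul]
    _ = ∑ d ∈ Icc 1 N, ∑ p ∈ hyperbolaPairs N with d ∣ p.1 ∧ d ∣ p.2, μ d * f (p.1 * p.2) := by
        simp only [sum_filter]
        exact sum_comm
    _ = ∑ d ∈ Icc 1 N, μ d * f d ^ 2 * hyperbolaSum f (N / (d * d)) := by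
        refine sum_congr rfl fun d hd ↦ ?_
        have hd := (mem_Icc.1 hd).1
        rw [← mul_sum, sum_filter_dvd_hyperbolaPairs hf hd hd, hf]
        ring

end HyperbolaSums

/-! ### Squared-logarithm asymptotics -/

section LogSqAsymptotics

open Finset
open scoped ArithmeticFunction.Moebius

theorem abs_log_div_sub_sq_log_succ_sub_le {n : ℕ} (hn : 0 < n) :
    |Real.log (n + 1 : ℕ) / (n + 1 : ℕ) -
        (Real.log (n + 1 : ℕ) ^ 2 / 2 - Real.log n ^ 2 / 2)| ≤ 2 * ((n + 1 : ℕ) : ℝ)⁻¹ := by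
  have hnR : (1 : ℝ) ≤ n := by exact_mod_cast hn
  set L := Real.log (n + 1 : ℕ) with hL
  set x := L - Real.log n with hx
  have hxlog : x = Real.log ((n + 1) / n) := by
    rw [hx, hL, Nat.cast_succ, Real.log_div (by positivity) (by positivity)]
  have hxle : x ≤ (n : ℝ)⁻¹ := by
    calc x ≤ (n + 1) / n - 1 := hxlog ▸ Real.log_le_sub_one_of_pos (by positivity)
      _ = (n : ℝ)⁻¹ := by field_simp; ring
  have hlex : ((n : ℝ) + 1)⁻¹ ≤ x := by
    calc ((n : ℝ) + 1)⁻¹ = 1 - ((n + 1) / n : ℝ)⁻¹ := by field_simp; ring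
      _ ≤ x := hxlog ▸ Real.one_sub_inv_le_log_of_pos (by positivity)
  have hL0 : 0 ≤ L := Real.log_natCast_nonneg _
  have hLn : L ≤ n := by
    simpa [hL] using Real.log_le_sub_one_of_pos (show (0 : ℝ) < (n + 1 : ℕ) by positivity)
  have hsq : x ^ 2 ≤ 2 * ((n : ℝ) + 1)⁻¹ := by
    calc x ^ 2 ≤ (n : ℝ)⁻¹ ^ 2 := by
          have : 0 ≤ x := hlex.trans' (by positivity)
          gcongr
      _ ≤ 2 * ((n : ℝ) + 1)⁻¹ := by
          rw [inv_pow, ← div_eq_mul_inv, inv_eq_one_div,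
            div_le_div_iff₀ (by positivity) (by positivity)]
          nlinarith
  have hprod : L * (x - ((n : ℝ) + 1)⁻¹) ≤ ((n : ℝ) + 1)⁻¹ := by
    calc L * (x - ((n : ℝ) + 1)⁻¹) ≤ n * ((n : ℝ)⁻¹ - ((n : ℝ) + 1)⁻¹) := by gcongr
      _ = ((n : ℝ) + 1)⁻¹ := by field_simp; ring
  have hprod0 : 0 ≤ L * (x - ((n : ℝ) + 1)⁻¹) := mul_nonneg hL0 (by linarith)
  rw [show Real.log n = L - x by rw [hx]; ring, div_eq_mul_inv, Nat.cast_succ, abs_le]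
  constructor <;> nlinarith [sq_nonneg x]

theorem abs_sum_log_div_sub_le (N : ℕ) :
    |∑ u ∈ Icc 1 N, Real.log u / u - Real.log N ^ 2 / 2| ≤ 2 * (harmonic N : ℝ) := by
  induction N with
  | zero => simp
  | succ n ih =>
    obtain rfl | hn := n.eq_zero_or_pos
    · simp
    rw [sum_Icc_succ_top (by omega), harmonic_succ]
    have hstep := abs_le.1 (abs_log_div_sub_sq_log_succ_sub_le hn)
    have ih := abs_le.1 ih
    push_cast at hstep ih ⊢
    exact abs_le.2 ⟨by linarith, by linarith⟩

theorem log_natCast_le_log_natCast {m n : ℕ} (h : m ≤ n) : Real.log m ≤ Real.log n := by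
  obtain rfl | hm := m.eq_zero_or_pos
  · simpa using Real.log_natCast_nonneg n
  · gcongr

theorem log_le_log_div_add_log_add_one (N : ℕ) {d : ℕ} (hd : 0 < d) :
    Real.log N ≤ Real.log (N / d : ℕ) + Real.log d + 1 := by
  obtain h | h := (N / d).eq_zero_or_pos
  · have hlt : N < d := (Nat.div_eq_zero_iff_lt hd).1 h
    have := log_natCast_le_log_natCast hlt.le
    simp only [h, Nat.cast_zero, Real.log_zero]
    linarith
  · have hle : N ≤ N / d * d * 2 := by
      have := Nat.div_add_mod N d
      have := Nat.mod_lt N hd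
      nlinarith
    have hlog2 : Real.log 2 ≤ 1 := by
      simpa [one_add_one_eq_two.symm] using Real.log_le_sub_one_of_pos (two_pos (α := ℝ))
    calc Real.log N ≤ Real.log (N / d * d * 2 : ℕ) := log_natCast_le_log_natCast hle
      _ = Real.log (N / d : ℕ) + Real.log d + Real.log 2 := by
        rw [Nat.cast_mul, Nat.cast_mul, Real.log_mul (by positivity) (by positivity),
          Real.log_mul (by positivity) (by positivity), Nat.cast_two]
      _ ≤ Real.log (N / d : ℕ) + Real.log d + 1 := by gcongr

/-- `f N = c * log N ^ 2 + O(1 + log N)`, uniformly in all natural numbers `N`. -/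
def HasLogSqAsymptotic (f : ℕ → ℝ) (c : ℝ) : Prop :=
  (fun N ↦ f N - c * Real.log N ^ 2) =O[⊤] fun N ↦ 1 + Real.log N

theorem hasLogSqAsymptotic_iff {f : ℕ → ℝ} {c : ℝ} :
    HasLogSqAsymptotic f c ↔
      ∃ K, ∀ N : ℕ, |f N - c * Real.log N ^ 2| ≤ K * (1 + Real.log N) := by
  have hnorm (N : ℕ) : ‖1 + Real.log N‖ = 1 + Real.log N :=
    Real.norm_of_nonneg (by positivity)
  simp only [HasLogSqAsymptotic, Asymptotics.isBigO_top, hnorm, Real.norm_eq_abs]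

namespace HasLogSqAsymptotic

variable {f g : ℕ → ℝ} {a b : ℝ}

theorem add (hf : HasLogSqAsymptotic f a) (hg : HasLogSqAsymptotic g b) :
    HasLogSqAsymptotic (fun N ↦ f N + g N) (a + b) :=
  (Asymptotics.IsBigO.add hf hg).congr_left fun N ↦ by ring

theorem sub (hf : HasLogSqAsymptotic f a) (hg : HasLogSqAsymptotic g b) :
    HasLogSqAsymptotic (fun N ↦ f N - g N) (a - b) :=
  (Asymptotics.IsBigO.sub hf hg).congr_left fun N ↦ by ring

theorem const_mul (hf : HasLogSqAsymptotic f a) (r : ℝ) :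
    HasLogSqAsymptotic (fun N ↦ r * f N) (r * a) :=
  (hf.const_mul_left r).congr_left fun N ↦ by ring

theorem exists_abs_comp_div_sub_le (hf : HasLogSqAsymptotic f a) :
    ∃ K, ∀ N d : ℕ, 0 < d →
      |f (N / d) - a * Real.log N ^ 2| ≤ K * (1 + Real.log N) * (1 + Real.log d) := by
  obtain ⟨K, hK⟩ := hasLogSqAsymptotic_iff.1 hf
  have hK0 : 0 ≤ K := by simpa using (abs_nonneg _).trans (hK 0)
  refine ⟨K + 2 * |a|, fun N d hd ↦ ?_⟩
  have hle := log_natCast_le_log_natCast (N.div_le_self d)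
  have hge := log_le_log_div_add_log_add_one N hd
  have hl := Real.log_natCast_nonneg (N / d)
  have hD := Real.log_natCast_nonneg d
  have hKNd := hK (N / d)
  set l := Real.log (N / d : ℕ)
  set L := Real.log N
  set D := Real.log d
  have hlin : 1 + l ≤ (1 + L) * (1 + D) := by nlinarith
  have hsq : |l ^ 2 - L ^ 2| ≤ 2 * ((1 + L) * (1 + D)) := by
    rw [abs_le]
    constructor <;> nlinarith
  calc |f (N / d) - a * L ^ 2| = |(f (N / d) - a * l ^ 2) + a * (l ^ 2 - L ^ 2)| := by ring_nf
    _ ≤ |f (N / d) - a * l ^ 2| + |a| * |l ^ 2 - L ^ 2| := by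
      rw [← abs_mul]
      exact abs_add_le _ _
    _ ≤ K * ((1 + L) * (1 + D)) + |a| * (2 * ((1 + L) * (1 + D))) := by
      gcongr
      exact hKNd.trans (by gcongr)
    _ = (K + 2 * |a|) * (1 + L) * (1 + D) := by ring

theorem comp_div (hf : HasLogSqAsymptotic f a) {d : ℕ} (hd : 0 < d) :
    HasLogSqAsymptotic (fun N ↦ f (N / d)) a := by
  obtain ⟨K, hK⟩ := hf.exists_abs_comp_div_sub_le
  exact hasLogSqAsymptotic_iff.2 ⟨K * (1 + Real.log d), fun N ↦ (hK N d hd).trans_eq (by ring)⟩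

end HasLogSqAsymptotic

theorem hyperbolaSum_inv_eq_sum_harmonic (N : ℕ) :
    hyperbolaSum (fun n ↦ (n : ℝ)⁻¹) N = ∑ u ∈ Icc 1 N, (u : ℝ)⁻¹ * harmonic (N / u) := by
  rw [hyperbolaSum, sum_hyperbolaPairs (fun p ↦ ((p.1 * p.2 : ℕ) : ℝ)⁻¹)]
  simp only [Nat.cast_mul, mul_inv, ← mul_sum, cast_harmonic_eq_sum_Icc]

theorem abs_harmonic_div_sub_le {N u : ℕ} (hu : 0 < u) (huN : u ≤ N) :
    |(harmonic (N / u) : ℝ) - (Real.log N - Real.log u)| ≤ 1 := by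
  have hu0 : (0 : ℝ) < u := by exact_mod_cast hu
  have hN0 : (0 : ℝ) < N := by exact_mod_cast hu.trans_le huN
  have hle : (1 : ℝ) ≤ N / u := (one_le_div hu0).2 (by exact_mod_cast huN)
  have hlower := log_le_harmonic_floor (N / u : ℝ) (by positivity)
  have hupper := harmonic_floor_le_one_add_log (N / u : ℝ) hle
  rw [Nat.floor_div_eq_div, Real.log_div hN0.ne' hu0.ne'] at hlower hupper
  exact abs_le.2 ⟨by linarith, by linarith⟩

theorem hasLogSqAsymptotic_hyperbolaSum_inv :
    HasLogSqAsymptotic (hyperbolaSum fun n ↦ (n : ℝ)⁻¹) (1 / 2) := by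
  refine hasLogSqAsymptotic_iff.2 ⟨5, fun N ↦ ?_⟩
  have hH : |hyperbolaSum (fun n ↦ (n : ℝ)⁻¹) N -
      ∑ u ∈ Icc 1 N, (u : ℝ)⁻¹ * (Real.log N - Real.log u)| ≤ harmonic N := by
    rw [hyperbolaSum_inv_eq_sum_harmonic, ← sum_sub_distrib, cast_harmonic_eq_sum_Icc N]
    refine (abs_sum_le_sum_abs _ _).trans (sum_le_sum fun u hu ↦ ?_)
    obtain ⟨hu, huN⟩ := mem_Icc.1 hu
    rw [← mul_sub, abs_mul, abs_of_nonneg (by positivity : (0 : ℝ) ≤ (u : ℝ)⁻¹)]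
    exact mul_le_of_le_one_right (by positivity) (abs_harmonic_div_sub_le hu huN)
  have hsum : ∑ u ∈ Icc 1 N, (u : ℝ)⁻¹ * (Real.log N - Real.log u) =
      harmonic N * Real.log N - ∑ u ∈ Icc 1 N, Real.log u / u := by
    simp only [mul_sub, sum_sub_distrib, ← sum_mul, cast_harmonic_eq_sum_Icc, div_eq_inv_mul]
  have hL := Real.log_natCast_nonneg N
  have hlog := abs_le.1 (abs_sum_log_div_sub_le N)
  have hupper := harmonic_le_one_add_log N
  have hlower : Real.log N ≤ harmonic N := by
    simpa using log_le_harmonic_floor N N.cast_nonneg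
  rw [hsum] at hH
  have hH := abs_le.1 hH
  exact abs_le.2 ⟨by nlinarith, by nlinarith⟩

theorem hasLogSqAsymptotic_hyperbolaSum_oddInv :
    HasLogSqAsymptotic (hyperbolaSum oddInv) (1 / 8) := by
  have h := hasLogSqAsymptotic_hyperbolaSum_inv
  have hcomb := (h.sub (h.comp_div two_pos)).add ((h.comp_div four_pos).const_mul 4⁻¹)
  rw [show hyperbolaSum oddInv = _ from funext hyperbolaSum_oddInv]
  convert hcomb using 1
  norm_num

theorem summable_inv_sq_mul_one_add_log :
    Summable fun d : ℕ ↦ ((d : ℝ) ^ 2)⁻¹ * (1 + Real.log (d * d : ℕ)) := by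
  have hmaj : Summable fun d : ℕ ↦ 5 * (1 / (d : ℝ) ^ (3 / 2 : ℝ)) :=
    (Real.summable_one_div_nat_rpow.2 (by norm_num)).mul_left 5
  refine hmaj.of_nonneg_of_le (fun d ↦ by positivity) fun d ↦ ?_
  obtain rfl | hd := d.eq_zero_or_pos
  · simp
  have hd1 : (1 : ℝ) ≤ d := by exact_mod_cast hd
  have hlog : 1 + Real.log (d * d : ℕ) ≤ 5 * (d : ℝ) ^ (1 / 2 : ℝ) := by
    have hle : Real.log d ≤ (d : ℝ) ^ (1 / 2 : ℝ) / (1 / 2) :=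
      Real.log_le_rpow_div (by positivity) (by norm_num)
    have hone : (1 : ℝ) ≤ (d : ℝ) ^ (1 / 2 : ℝ) := Real.one_le_rpow hd1 (by norm_num)
    rw [Nat.cast_mul, Real.log_mul (by positivity) (by positivity)]
    linarith
  calc ((d : ℝ) ^ 2)⁻¹ * (1 + Real.log (d * d : ℕ))
      ≤ ((d : ℝ) ^ 2)⁻¹ * (5 * (d : ℝ) ^ (1 / 2 : ℝ)) := by gcongr
    _ = 5 * (1 / (d : ℝ) ^ (3 / 2 : ℝ)) := by
      have hsplit : (d : ℝ) ^ 2 = (d : ℝ) ^ (3 / 2 : ℝ) * (d : ℝ) ^ (1 / 2 : ℝ) := by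
        rw [← Real.rpow_add (by positivity), ← Real.rpow_natCast]
        norm_num
      rw [hsplit]
      field_simp

theorem abs_moebius_mul_sq_le {f : ℕ → ℝ} (hf : ∀ n : ℕ, |f n| ≤ (n : ℝ)⁻¹) (d : ℕ) :
    |μ d * f d ^ 2| ≤ ((d : ℝ) ^ 2)⁻¹ := by
  have hμ : |(μ d : ℝ)| ≤ 1 := by exact_mod_cast ArithmeticFunction.abs_moebius_le_one (n := d)
  rw [abs_mul, abs_pow, ← inv_pow]
  calc |(μ d : ℝ)| * |f d| ^ 2 ≤ 1 * (d : ℝ)⁻¹ ^ 2 := by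
        gcongr
        exact hf d
    _ = (d : ℝ)⁻¹ ^ 2 := one_mul _

theorem hasSum_moebius_mul_hyperbolaSum {f : ℕ → ℝ} (hf : ∀ m n, f (m * n) = f m * f n)
    (N : ℕ) :
    HasSum (fun d : ℕ ↦ μ d * f d ^ 2 * hyperbolaSum f (N / (d * d)))
      (coprimeHyperbolaSum f N) := by
  rw [coprimeHyperbolaSum_eq_sum_moebius hf]
  refine hasSum_sum_of_ne_finset_zero fun d hd ↦ ?_
  obtain rfl | hd0 := d.eq_zero_or_pos
  · simp
  have hNd : N < d * d := by
    rw [mem_Icc, not_and, not_le] at hd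
    nlinarith [hd hd0]
  rw [Nat.div_eq_of_lt hNd]
  simp [hyperbolaSum, hyperbolaPairs]

theorem HasLogSqAsymptotic.coprimeHyperbolaSum {f : ℕ → ℝ} {a S : ℝ}
    (hmul : ∀ m n, f (m * n) = f m * f n) (hle : ∀ n : ℕ, |f n| ≤ (n : ℝ)⁻¹)
    (hf : HasLogSqAsymptotic (hyperbolaSum f) a) (hS : HasSum (fun d : ℕ ↦ μ d * f d ^ 2) S) :
    HasLogSqAsymptotic (coprimeHyperbolaSum f) (a * S) := by
  obtain ⟨K, hK⟩ := hf.exists_abs_comp_div_sub_le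
  refine hasLogSqAsymptotic_iff.2
    ⟨K * ∑' d : ℕ, ((d : ℝ) ^ 2)⁻¹ * (1 + Real.log (d * d : ℕ)), fun N ↦ ?_⟩
  have hdiff := (hasSum_moebius_mul_hyperbolaSum hmul N).sub (hS.mul_right (a * Real.log N ^ 2))
  have hmaj := summable_inv_sq_mul_one_add_log.hasSum.mul_left (K * (1 + Real.log N))
  calc |_root_.coprimeHyperbolaSum f N - a * S * Real.log N ^ 2|
      = ‖∑' d : ℕ, (μ d * f d ^ 2 * hyperbolaSum f (N / (d * d)) -
          μ d * f d ^ 2 * (a * Real.log N ^ 2))‖ := by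
        rw [hdiff.tsum_eq, Real.norm_eq_abs]
        ring_nf
    _ ≤ K * (1 + Real.log N) * ∑' d : ℕ, ((d : ℝ) ^ 2)⁻¹ * (1 + Real.log (d * d : ℕ)) := by
        refine tsum_of_norm_bounded hmaj fun d ↦ ?_
        obtain rfl | hd := d.eq_zero_or_pos
        · simp
        rw [← mul_sub, Real.norm_eq_abs, abs_mul]
        exact (mul_le_mul (abs_moebius_mul_sq_le hle d) (hK N (d * d) (by positivity))
          (abs_nonneg _) (by positivity)).trans_eq (by ring)
    _ = K * (∑' d : ℕ, ((d : ℝ) ^ 2)⁻¹ * (1 + Real.log (d * d : ℕ))) * (1 + Real.log N) := by ring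

theorem LSeries_moebius_two : LSeries (fun n ↦ (μ n : ℂ)) 2 = 6 / (Real.pi : ℂ) ^ 2 := by
  have hs : (1 : ℝ) < (2 : ℂ).re := by norm_num
  have h := LSeries_one_mul_Lseries_moebius hs
  rw [LSeries_one_eq_riemannZeta hs, riemannZeta_two] at h
  have hpi : (Real.pi : ℂ) ≠ 0 := by exact_mod_cast Real.pi_ne_zero
  field_simp at h ⊢
  linear_combination h

theorem hasSum_moebius_mul_inv_sq :
    HasSum (fun d : ℕ ↦ μ d * (d : ℝ)⁻¹ ^ 2) (6 / Real.pi ^ 2) := by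
  have hL : LSeriesHasSum (fun n ↦ (μ n : ℂ)) 2 _ :=
    (ArithmeticFunction.LSeriesSummable_moebius_iff.2 (by norm_num)).LSeriesHasSum
  rw [LSeries_moebius_two] at hL
  rw [← Complex.hasSum_ofReal]
  push_cast
  refine hL.congr_fun fun n ↦ ?_
  obtain rfl | hn := n.eq_zero_or_pos
  · simp
  · simp [hn.ne', div_eq_mul_inv]

theorem moebius_two_mul_mul_inv_sq (k : ℕ) :
    μ (2 * k) * ((2 * k : ℕ) : ℝ)⁻¹ ^ 2 = -(1 / 4) * (μ k * oddInv k ^ 2) := by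
  by_cases hk : Odd k
  · rw [ArithmeticFunction.isMultiplicative_moebius.map_mul_of_coprime (Nat.coprime_two_left.2 hk),
      ArithmeticFunction.moebius_apply_prime Nat.prime_two, oddInv, if_pos hk]
    push_cast
    ring
  · have hsq : ¬Squarefree (2 * k) := fun h ↦ by
      simpa using h 2 (mul_dvd_mul_left 2 (Nat.not_odd_iff_even.1 hk).two_dvd)
    simp [ArithmeticFunction.moebius_eq_zero_of_not_squarefree hsq, oddInv, hk]

theorem hasSum_moebius_mul_oddInv_sq :
    HasSum (fun d : ℕ ↦ μ d * oddInv d ^ 2) (8 / Real.pi ^ 2) := by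
  obtain ⟨S, hS⟩ : Summable fun d : ℕ ↦ μ d * oddInv d ^ 2 :=
    (Real.summable_nat_pow_inv.2 one_lt_two).of_norm_bounded (abs_moebius_mul_sq_le abs_oddInv_le)
  have hdiff : HasSum (fun d : ℕ ↦ μ d * (d : ℝ)⁻¹ ^ 2 - μ d * oddInv d ^ 2)
      (-(1 / 4) * S) := by
    rw [← (mul_right_injective₀ (two_ne_zero (α := ℕ))).hasSum_iff]
    · refine (hS.mul_left (-(1 / 4))).congr_fun fun k ↦ ?_
      have heven : oddInv (2 * k) = 0 := if_neg (Nat.not_odd_iff_even.2 (even_two_mul k))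
      simp only [Function.comp_apply, moebius_two_mul_mul_inv_sq, heven]
      ring
    · intro d hd
      have hodd : Odd d := by
        rw [← Nat.not_even_iff_odd, even_iff_two_dvd]
        rintro ⟨k, rfl⟩
        exact hd ⟨k, rfl⟩
      simp [oddInv, hodd]
  have hlin := (hasSum_moebius_mul_inv_sq.sub hS).unique hdiff
  have hS' : S = 8 / Real.pi ^ 2 := by
    calc S = 4 / 3 * (6 / Real.pi ^ 2) := by linarith
      _ = 8 / Real.pi ^ 2 := by ring
  rwa [← hS']

theorem hasLogSqAsymptotic_coprimeHyperbolaSum_inv :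
    HasLogSqAsymptotic (coprimeHyperbolaSum fun n ↦ (n : ℝ)⁻¹) (3 / Real.pi ^ 2) := by
  convert hasLogSqAsymptotic_hyperbolaSum_inv.coprimeHyperbolaSum (by simp [mul_comm]) (by simp)
    hasSum_moebius_mul_inv_sq using 1
  ring

theorem hasLogSqAsymptotic_coprimeHyperbolaSum_oddInv :
    HasLogSqAsymptotic (coprimeHyperbolaSum oddInv) (1 / Real.pi ^ 2) := by
  convert hasLogSqAsymptotic_hyperbolaSum_oddInv.coprimeHyperbolaSum oddInv_mul abs_oddInv_le
    hasSum_moebius_mul_oddInv_sq using 1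
  ring

theorem exists_abs_ncard_notMem_Gamma_two_sub_le :
    ∃ K, ∀ N : ℕ,
      |({A ∈ normalizedMatrices N | A ∉ Gamma 2}.ncard : ℝ) -
        3 / Real.pi ^ 2 * (N * Real.log N ^ 2)| ≤ K * (N * (1 + Real.log N)) := by
  have hodd := hasLogSqAsymptotic_coprimeHyperbolaSum_oddInv
  have hdiff := (hasLogSqAsymptotic_coprimeHyperbolaSum_inv.sub hodd).comp_div four_pos
  obtain ⟨K, hK⟩ := hasLogSqAsymptotic_iff.1 (hodd.add (hdiff.const_mul 4⁻¹))
  refine ⟨2 * K + 8, fun N ↦ ?_⟩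
  have hpairs := abs_le.1 (abs_card_normalizedPairs_sub_le N)
  have hcard := card_hyperbolaPairs_le N
  have hconst : 1 / Real.pi ^ 2 + 4⁻¹ * (3 / Real.pi ^ 2 - 1 / Real.pi ^ 2) =
      3 / Real.pi ^ 2 / 2 := by ring
  have hsum := abs_le.1 (hK N)
  rw [hconst] at hsum
  have hlower := mul_le_mul_of_nonneg_left hsum.1 (N.cast_nonneg (α := ℝ))
  have hupper := mul_le_mul_of_nonneg_left hsum.2 (N.cast_nonneg (α := ℝ))
  rw [ncard_notMem_Gamma_two, Nat.cast_mul, Nat.cast_two]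
  generalize 3 / Real.pi ^ 2 = c at *
  exact abs_le.2 ⟨by linarith, by linarith⟩

end LogSqAsymptotics

/-! ### From traces to translation lengths -/

section TranslationLength

open Filter Asymptotics

theorem ncard_not_isPrim_le_mul_log {N : ℕ} (hN : 0 < N) :
    ({A ∈ normalizedMatrices N | ¬IsPrim A}.ncard : ℝ) ≤ 12 * (N * (1 + Real.log N)) := by
  have hsqrt : (N.sqrt + 1) * (2 * N.sqrt + 1) ≤ 6 * N := by
    have := N.sqrt_le
    have := Nat.sqrt_pos.2 hN
    nlinarith
  have hlog : (Nat.log 2 N : ℝ) + 1 ≤ 2 * (1 + Real.log N) := by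
    have hle : (Nat.log 2 N : ℝ) * Real.log 2 ≤ Real.log N := by
      rw [← le_div_iff₀ (Real.log_pos one_lt_two)]
      exact_mod_cast Real.natLog_le_logb N 2
    nlinarith [Real.log_two_gt_d9, Real.log_natCast_nonneg N]
  calc ({A ∈ normalizedMatrices N | ¬IsPrim A}.ncard : ℝ)
      ≤ (Nat.log 2 N + 1) * ((N.sqrt + 1) * (2 * N.sqrt + 1)) := by
        exact_mod_cast ncard_not_isPrim_le N
    _ ≤ 2 * (1 + Real.log N) * (6 * N) :=
        mul_le_mul hlog (by exact_mod_cast hsqrt) (by positivity) (by positivity)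
    _ = 12 * (N * (1 + Real.log N)) := by ring

theorem exists_abs_ncard_notMem_Gamma_two_and_isPrim_sub_le :
    ∃ K, ∀ N : ℕ, 0 < N →
      |({A ∈ normalizedMatrices N | A ∉ Gamma 2 ∧ IsPrim A}.ncard : ℝ) -
        3 / Real.pi ^ 2 * (N * Real.log N ^ 2)| ≤ K * (N * (1 + Real.log N)) := by
  obtain ⟨K, hK⟩ := exists_abs_ncard_notMem_Gamma_two_sub_le
  refine ⟨K + 12, fun N hN ↦ ?_⟩
  set S := {A ∈ normalizedMatrices N | A ∉ Gamma 2}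
  set T := {A ∈ normalizedMatrices N | A ∉ Gamma 2 ∧ IsPrim A}
  set U := {A ∈ normalizedMatrices N | ¬IsPrim A}
  have hfin := finite_normalizedMatrices N
  have hTS : T.ncard ≤ S.ncard :=
    Set.ncard_le_ncard (fun A hA ↦ ⟨hA.1, hA.2.1⟩) (hfin.subset (Set.sep_subset _ _))
  have hSTU : S.ncard ≤ T.ncard + U.ncard := by
    refine (Set.ncard_le_ncard (fun A hA ↦ ?_)
      (hfin.subset (Set.union_subset (Set.sep_subset _ _) (Set.sep_subset _ _)))).trans
      (Set.ncard_union_le T U)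
    by_cases hprim : IsPrim (A : PSL2Z)
    exacts [Or.inl ⟨hA.1, hA.2, hprim⟩, Or.inr ⟨hA.1, hprim⟩]
  have hU := ncard_not_isPrim_le_mul_log hN
  have hS := abs_le.1 (hK N)
  rify at hTS hSTU
  exact abs_le.2 ⟨by linarith, by nlinarith [Real.log_natCast_nonneg N]⟩

theorem abs_floor_cosh_sub_le {x : ℝ} (hx : 0 ≤ x) :
    |(⌊Real.cosh x⌋₊ : ℝ) - Real.exp x / 2| ≤ 1 := by
  have hle := Nat.floor_le (Real.cosh_pos x).le
  have hlt := Nat.lt_floor_add_one (Real.cosh x)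
  have hneg : Real.exp (-x) ≤ 1 := Real.exp_le_one_iff.2 (neg_nonpos.2 hx)
  have := Real.exp_pos (-x)
  rw [Real.cosh_eq] at *
  exact abs_le.2 ⟨by linarith, by linarith⟩

theorem abs_log_floor_cosh_sub_le {x : ℝ} (hx : 2 ≤ x) :
    |Real.log ⌊Real.cosh x⌋₊ - x| ≤ 2 := by
  have hN := abs_le.1 (abs_floor_cosh_sub_le (zero_le_two.trans hx))
  have htwo : 5 ≤ Real.exp 2 := by
    rw [← one_add_one_eq_two, Real.exp_add]
    nlinarith [Real.exp_one_gt_d9]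
  have hx5 : 5 ≤ Real.exp x := htwo.trans (Real.exp_le_exp.2 hx)
  have hpos : (0 : ℝ) < ⌊Real.cosh x⌋₊ := by linarith
  have hupper : Real.log ⌊Real.cosh x⌋₊ ≤ x := (Real.log_le_iff_le_exp hpos).2 (by linarith)
  have hlower : x - 2 ≤ Real.log ⌊Real.cosh x⌋₊ := by
    rw [Real.le_log_iff_exp_le hpos, Real.exp_sub]
    calc Real.exp x / Real.exp 2 ≤ Real.exp x / 5 := by gcongr
      _ ≤ ⌊Real.cosh x⌋₊ := by linarith
  exact abs_le.2 ⟨by linarith, by linarith⟩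

theorem isBigO_floor_cosh_sub :
    (fun x : ℝ ↦ (⌊Real.cosh x⌋₊ : ℝ) - Real.exp x / 2) =O[atTop] (1 : ℝ → ℝ) :=
  .of_bound 1 <| (eventually_ge_atTop 0).mono fun x hx ↦ by simpa using abs_floor_cosh_sub_le hx

theorem isBigO_log_floor_cosh_sub :
    (fun x : ℝ ↦ Real.log ⌊Real.cosh x⌋₊ - x) =O[atTop] (1 : ℝ → ℝ) :=
  .of_bound 2 <| (eventually_ge_atTop 2).mono fun x hx ↦ by
    simpa using abs_log_floor_cosh_sub_le hx

theorem isBigO_one_id_atTop : (1 : ℝ → ℝ) =O[atTop] (id : ℝ → ℝ) :=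
  (isLittleO_const_id_atTop (1 : ℝ)).isBigO

theorem isBigO_log_floor_cosh :
    (fun x : ℝ ↦ Real.log ⌊Real.cosh x⌋₊) =O[atTop] (id : ℝ → ℝ) :=
  ((isBigO_log_floor_cosh_sub.trans isBigO_one_id_atTop).add (isBigO_refl id atTop)).congr_left
    fun x ↦ sub_add_cancel _ x

theorem isBigO_floor_cosh_mul_one_add_log :
    (fun x : ℝ ↦ (⌊Real.cosh x⌋₊ : ℝ) * (1 + Real.log ⌊Real.cosh x⌋₊)) =O[atTop]
      fun x ↦ x * Real.exp x := by
  have hfloor : (fun x : ℝ ↦ (⌊Real.cosh x⌋₊ : ℝ)) =O[atTop] Real.exp := by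
    have hone : (1 : ℝ → ℝ) =O[atTop] Real.exp :=
      Real.isLittleO_one_exp_comp.2 tendsto_id |>.isBigO
    refine ((isBigO_floor_cosh_sub.trans hone).add
      ((isBigO_refl Real.exp atTop).const_mul_left 2⁻¹)).congr_left fun x ↦ by ring
  exact (hfloor.mul (isBigO_one_id_atTop.add isBigO_log_floor_cosh)).congr_right
    fun x ↦ mul_comm _ _

theorem isBigO_floor_cosh_mul_log_sq_sub :
    (fun x : ℝ ↦ (⌊Real.cosh x⌋₊ : ℝ) * Real.log ⌊Real.cosh x⌋₊ ^ 2 - Real.exp x / 2 * x ^ 2)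
      =O[atTop] fun x ↦ x * Real.exp x := by
  have hid : (id : ℝ → ℝ) =O[atTop] Real.exp := by
    simpa [Function.id_def] using (Real.isLittleO_pow_exp_atTop (n := 1)).isBigO
  have hfloor : (fun x : ℝ ↦ ((⌊Real.cosh x⌋₊ : ℝ) - Real.exp x / 2) *
      Real.log ⌊Real.cosh x⌋₊ ^ 2) =O[atTop] fun x ↦ x * Real.exp x :=
    ((isBigO_floor_cosh_sub.mul (isBigO_log_floor_cosh.pow 2)).congr_right
      fun x ↦ by simp [sq]).trans ((isBigO_refl id atTop).mul hid)
  have hlog : (fun x : ℝ ↦ Real.exp x * ((Real.log ⌊Real.cosh x⌋₊ - x) *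
      (Real.log ⌊Real.cosh x⌋₊ + x))) =O[atTop] fun x ↦ x * Real.exp x :=
    ((isBigO_refl Real.exp atTop).mul (isBigO_log_floor_cosh_sub.mul
      (isBigO_log_floor_cosh.add (isBigO_refl id atTop)))).congr_right fun x ↦ by simp [mul_comm]
  exact (hfloor.add (hlog.const_mul_left 2⁻¹)).congr_left fun x ↦ by ring

theorem isBigO_nAmbBoth_two_mul_sub :
    (fun x : ℝ ↦ (NAmbBoth (2 * x) : ℝ) -
      3 / Real.pi ^ 2 * (⌊Real.cosh x⌋₊ * Real.log ⌊Real.cosh x⌋₊ ^ 2)) =O[atTop]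
      fun x ↦ (⌊Real.cosh x⌋₊ : ℝ) * (1 + Real.log ⌊Real.cosh x⌋₊) := by
  obtain ⟨K, hK⟩ := exists_abs_ncard_notMem_Gamma_two_and_isPrim_sub_le
  refine .of_bound K <| (eventually_ge_atTop 0).mono fun x hx ↦ ?_
  have hN : 0 < ⌊Real.cosh x⌋₊ := Nat.floor_pos.2 (Real.one_le_cosh x)
  rw [nAmbBoth_eq_ncard (by positivity), mul_div_cancel_left₀ x two_ne_zero, Real.norm_eq_abs,
    Real.norm_of_nonneg (by positivity)]
  exact hK _ hN

end TranslationLength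

/-- Footnote 7 / Lemma 16(i) with Equation (72): as `s → +∞`,
`𝒩_A^{1&2}(s) = (3/(8π²)) s² e^{s/2} + O(s e^{s/2})`. -/
theorem ambiguous_both_kinds_classes_asymptotic :
    (fun s : ℝ => (NAmbBoth s : ℝ) - 3 / (8 * Real.pi ^ 2) * s ^ 2 * Real.exp (s / 2))
      =O[Filter.atTop] fun s : ℝ => s * Real.exp (s / 2) := by
  have hcount := isBigO_nAmbBoth_two_mul_sub.trans isBigO_floor_cosh_mul_one_add_log
  have hmain := isBigO_floor_cosh_mul_log_sq_sub.const_mul_left (3 / Real.pi ^ 2)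
  have hhalf : Filter.Tendsto (fun s : ℝ ↦ s / 2) Filter.atTop Filter.atTop :=
    Filter.tendsto_id.atTop_div_const two_pos
  have hsum : _ =O[Filter.atTop] fun s : ℝ ↦ 2⁻¹ * (s * Real.exp (s / 2)) :=
    ((hcount.add hmain).comp_tendsto hhalf).congr_right fun s ↦ by
      simp only [Function.comp_apply]
      ring
  refine (hsum.of_const_mul_right).congr_left fun s ↦ ?_
  simp only [Function.comp_apply, mul_div_cancel₀ s (two_ne_zero (α := ℝ))]
  ring
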